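/- arXiv:math/0608591 — 5 statements merged into one kernel-verified Lean document; each statement's English description precedes it below -/
import Mathlib

section
/- Let 𝒜 be a nonempty real central arrangement of hyperplanes in ℝ^ℓ with decomposition 𝒜 = 𝒜₁ ⊎ 𝒜₂ ⊎ ⋯ ⊎ 𝒜_r into nonempty indecomposable arrangements, and let m be a positive integer. Then there exists a natural bijection AM(𝒜, m) ≃ AM(𝒜₁, m) × AM(𝒜₂, m) × ⋯ × AM(𝒜_r, m). -/
/-!
The sign vector of a chamber determines it, because the points with prescribed signs form a
convex, hence connected, set (`ch_ext`). Additivity of the rank says that the linear map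
`V → ∏ᵢ V / Kᵢ`, with `Kᵢ` the intersection of the hyperplanes of the `i`-th block, has target of
the same dimension as its range, so it is onto (`exists_common_point`). Consequently chambers of
the blocks can be prescribed independently: every family of them comes from a chamber of the whole
arrangement having the same signs (`exists_glue`), while every chamber restricts to each block
(`exists_res`).

Admissibility says that the `j`-th sign of the output depends only on the `j`-th signs of the
inputs. Thus an admissible map on `A` induces one on each block (lift the inputs, apply the map,
restrict), admissible maps on the blocks glue to one on `A`, and comparing signs shows that these
two operations are mutually inverse.
-/

noncomputable section
attribute [local instance] Classical.propDecidable

/-- A (nonempty if `ι` is nonempty) real central arrangement of hyperplanes in `ℝ^ℓ`,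
given by a family of nonzero defining linear forms with pairwise distinct kernels
(the hyperplanes `H j = ker (form j)`). -/
structure Arrangement (ℓ : ℕ) (ι : Type) [Fintype ι] where
  form : ι → ((Fin ℓ → ℝ) →ₗ[ℝ] ℝ)
  form_ne_zero : ∀ j, form j ≠ 0
  ker_injective : ∀ j k, LinearMap.ker (form j) = LinearMap.ker (form k) → j = k

namespace Arrangement

variable {ℓ : ℕ} {ι : Type} [Fintype ι]

/-- The complement `ℝ^ℓ ∖ (H₁ ∪ ⋯ ∪ Hₙ)`. -/
def Complement (A : Arrangement ℓ ι) : Set (Fin ℓ → ℝ) :=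
  {x | ∀ j, A.form j x ≠ 0}

/-- A chamber is a connected component of the complement. -/
def IsChamber (A : Arrangement ℓ ι) (C : Set (Fin ℓ → ℝ)) : Prop :=
  ∃ x ∈ A.Complement, C = connectedComponentIn A.Complement x

/-- The set (type) of chambers of the arrangement. -/
abbrev Ch (A : Arrangement ℓ ι) : Type := {C : Set (Fin ℓ → ℝ) // A.IsChamber C}

/-- `εⱼ^σ(C) = στ` when `C ⊆ Hⱼ^τ`; `B = {+,-}` is realized as `ℤˣ`, `+ = 1`, `- = -1`. -/
def eps (A : Arrangement ℓ ι) (j : ι) (σ : ℤˣ) (C : A.Ch) : ℤˣ :=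
  σ * (if ∀ x ∈ C.1, 0 < A.form j x then 1 else -1)

/-- `Φ : Ch^m → Ch` is admissible if there is a family `φⱼ^σ : B^m → B` with
`φⱼ^σ(+,…,+) = +` and `εⱼ^σ ∘ Φ = φⱼ^σ ∘ εⱼ^σ` (componentwise) for all `j, σ`. -/
def IsAdmissible (A : Arrangement ℓ ι) (m : ℕ) (Φ : (Fin m → A.Ch) → A.Ch) : Prop :=
  ∃ φ : ι → ℤˣ → ((Fin m → ℤˣ) → ℤˣ),
    (∀ j σ, φ j σ (fun _ => 1) = 1) ∧
    ∀ j σ 𝒞, A.eps j σ (Φ 𝒞) = φ j σ (fun i => A.eps j σ (𝒞 i))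

/-- `r(ℬ) = codim (⋂_{H ∈ ℬ} H)` for the subarrangement indexed by `S`. -/
def rnkOn (A : Arrangement ℓ ι) (S : Finset ι) : ℕ :=
  ℓ - Module.finrank ℝ ↥(⨅ j ∈ S, LinearMap.ker (A.form j))

/-- `r(𝒜)`. -/
def rnk (A : Arrangement ℓ ι) : ℕ := A.rnkOn Finset.univ

/-- The subarrangement indexed by `S` decomposes as a disjoint union of two nonempty
subarrangements with additive rank. -/
def DecomposableOn (A : Arrangement ℓ ι) (S : Finset ι) : Prop :=
  ∃ S₁ S₂ : Finset ι, S₁.Nonempty ∧ S₂.Nonempty ∧ Disjoint S₁ S₂ ∧ S₁ ∪ S₂ = S ∧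
    A.rnkOn S = A.rnkOn S₁ + A.rnkOn S₂

def IndecomposableOn (A : Arrangement ℓ ι) (S : Finset ι) : Prop := ¬ A.DecomposableOn S

def Decomposable (A : Arrangement ℓ ι) : Prop := A.DecomposableOn Finset.univ

def Indecomposable (A : Arrangement ℓ ι) : Prop := ¬ A.Decomposable

/-- The subarrangement of `A` consisting of the hyperplanes indexed by `S`. -/
def restrict (A : Arrangement ℓ ι) (S : Finset ι) : Arrangement ℓ {j : ι // j ∈ S} where
  form := fun j => A.form j.1
  form_ne_zero := fun j => A.form_ne_zero j.1
  ker_injective := fun j k h => Subtype.ext (A.ker_injective j.1 k.1 h)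

/-- A dependent subarrangement: `r(ℬ) < |ℬ|`. -/
def DependentOn (A : Arrangement ℓ ι) (S : Finset ι) : Prop := A.rnkOn S < S.card

/-- A circuit: a minimally dependent subarrangement. -/
def IsCircuitOn (A : Arrangement ℓ ι) (S : Finset ι) : Prop :=
  A.DependentOn S ∧ ∀ T ⊂ S, ¬ A.DependentOn T

end Arrangement

namespace Arrangement

section Geometry

variable {ℓ : ℕ} {ι : Type} [Fintype ι]

/-- The chamber containing a given point of the complement. -/
def chamberOf (A : Arrangement ℓ ι) (x : Fin ℓ → ℝ) (hx : x ∈ A.Complement) : A.Ch :=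
  ⟨connectedComponentIn A.Complement x, x, hx, rfl⟩

lemma exists_chamberOf (A : Arrangement ℓ ι) (C : A.Ch) :
    ∃ x hx, C = A.chamberOf x hx := by
  obtain ⟨C, x, hx, rfl⟩ := C
  exact ⟨x, hx, rfl⟩

/-- No form changes sign on a chamber: otherwise it would vanish somewhere on it, by the
intermediate value theorem. -/
lemma pos_of_mem_component (A : Arrangement ℓ ι) {x y z : Fin ℓ → ℝ}
    (hy : y ∈ connectedComponentIn A.Complement x)
    (hz : z ∈ connectedComponentIn A.Complement x) (j : ι) (hpos : 0 < A.form j y) :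
    0 < A.form j z := by
  by_contra hneg
  have hc : ContinuousOn (A.form j) (connectedComponentIn A.Complement x) :=
    (LinearMap.continuous_of_finiteDimensional (A.form j)).continuousOn
  obtain ⟨w, hw, hw0⟩ := isPreconnected_connectedComponentIn.intermediate_value hz hy hc
    (show (0 : ℝ) ∈ Set.Icc _ _ from ⟨not_lt.mp hneg, hpos.le⟩)
  exact connectedComponentIn_subset _ _ hw j hw0

lemma eps_chamberOf (A : Arrangement ℓ ι) (x : Fin ℓ → ℝ) (hx : x ∈ A.Complement) (j : ι)
    (σ : ℤˣ) : A.eps j σ (A.chamberOf x hx) = σ * (if 0 < A.form j x then 1 else -1) := by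
  have hmem := mem_connectedComponentIn hx
  have h : (∀ y ∈ (A.chamberOf x hx).1, 0 < A.form j y) ↔ 0 < A.form j x :=
    ⟨fun h => h x hmem, fun h y hy => A.pos_of_mem_component hmem hy j h⟩
  simp only [eps, h]

/-- Two points of the complement with the same signs lie in the same chamber, since the set of
points with those signs is convex. -/
lemma chamberOf_eq (A : Arrangement ℓ ι) {x y : Fin ℓ → ℝ} (hx : x ∈ A.Complement)
    (hy : y ∈ A.Complement) (h : ∀ j, 0 < A.form j x ↔ 0 < A.form j y) :
    A.chamberOf x hx = A.chamberOf y hy := by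
  have hseg : segment ℝ x y ⊆ A.Complement := by
    rintro z ⟨a, b, ha, hb, hab, rfl⟩ j
    simp only [map_add, map_smul, smul_eq_mul]
    rcases lt_or_gt_of_ne (hx j) with hxj | hxj
    · have hyj : A.form j y < 0 :=
        lt_of_le_of_ne (not_lt.mp fun hp => absurd ((h j).2 hp) hxj.le.not_gt) (hy j)
      rcases ha.eq_or_lt with rfl | ha
      · have : b = 1 := by linarith
        subst this
        linarith
      · nlinarith [mul_neg_of_pos_of_neg ha hxj, mul_nonpos_of_nonneg_of_nonpos hb hyj.le]
    · have hyj : 0 < A.form j y := (h j).1 hxj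
      rcases ha.eq_or_lt with rfl | ha
      · have : b = 1 := by linarith
        subst this
        linarith
      · nlinarith [mul_pos ha hxj, mul_nonneg hb hyj.le]
  have hmem : y ∈ connectedComponentIn A.Complement x :=
    (convex_segment x y).isPreconnected.subset_connectedComponentIn (left_mem_segment ℝ x y) hseg
      (right_mem_segment ℝ x y)
  exact Subtype.ext (connectedComponentIn_eq hmem)

lemma ch_ext (A : Arrangement ℓ ι) {C D : A.Ch} (h : ∀ j, A.eps j 1 C = A.eps j 1 D) :
    C = D := by
  obtain ⟨x, hx, rfl⟩ := A.exists_chamberOf C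
  obtain ⟨y, hy, rfl⟩ := A.exists_chamberOf D
  refine A.chamberOf_eq hx hy fun j => ?_
  have hj := h j
  simp only [eps_chamberOf, one_mul] at hj
  by_cases h1 : 0 < A.form j x <;> by_cases h2 : 0 < A.form j y <;>
    simp [h1, h2] at hj ⊢

lemma exists_res (A : Arrangement ℓ ι) (S : Finset ι) (C : A.Ch) :
    ∃ D : (A.restrict S).Ch, ∀ (j : {j // j ∈ S}) σ, (A.restrict S).eps j σ D = A.eps j.1 σ C := by
  obtain ⟨x, hx, rfl⟩ := A.exists_chamberOf C
  refine ⟨(A.restrict S).chamberOf x fun j => hx j.1, fun j σ => ?_⟩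
  exact ((A.restrict S).eps_chamberOf x _ j σ).trans (A.eps_chamberOf x hx j.1 σ).symm

/-- If the ranks of the blocks add up to the rank of the arrangement, then the values of the forms
can be prescribed independently on the blocks: `V → ∏ᵢ V / Kᵢ` is onto by a dimension count. -/
lemma exists_common_point (A : Arrangement ℓ ι) {r : ℕ} (P : Fin r → Finset ι)
    (hcover : ∀ j : ι, ∃ i, j ∈ P i) (hrnk : A.rnk = ∑ i, A.rnkOn (P i))
    (x : Fin r → Fin ℓ → ℝ) :
    ∃ y : Fin ℓ → ℝ, ∀ i, ∀ j ∈ P i, A.form j y = A.form j (x i) := by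
  set K : Fin r → Submodule ℝ (Fin ℓ → ℝ) := fun i => ⨅ j ∈ P i, LinearMap.ker (A.form j) with hK
  let f : (Fin ℓ → ℝ) →ₗ[ℝ] (∀ i, (Fin ℓ → ℝ) ⧸ K i) := LinearMap.pi fun i => (K i).mkQ
  have hker : LinearMap.ker f = ⨅ j ∈ (Finset.univ : Finset ι), LinearMap.ker (A.form j) := by
    ext y
    simp only [f, hK, LinearMap.mem_ker, funext_iff, LinearMap.pi_apply, Submodule.mkQ_apply,
      Pi.zero_apply, Submodule.Quotient.mk_eq_zero, Submodule.mem_iInf, Finset.mem_univ,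
      true_imp_iff]
    exact ⟨fun h j => (hcover j).elim fun i hi => h i j hi, fun h i j _ => h j⟩
  have hquot : ∀ i, Module.finrank ℝ ((Fin ℓ → ℝ) ⧸ K i) = A.rnkOn (P i) := fun i => by
    have := (K i).finrank_quotient_add_finrank
    rw [Module.finrank_fin_fun] at this
    simp only [rnkOn]
    change _ = ℓ - Module.finrank ℝ (K i)
    omega
  have hrange : Module.finrank ℝ (LinearMap.range f) = A.rnk := by
    have := f.finrank_range_add_finrank_ker
    rw [Module.finrank_fin_fun, hker] at this
    simp only [rnk, rnkOn]
    omega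
  have hsurj : LinearMap.range f = ⊤ := by
    apply Submodule.eq_top_of_finrank_eq
    rw [hrange, hrnk, Module.finrank_pi_fintype]
    exact Finset.sum_congr rfl fun i _ => (hquot i).symm
  obtain ⟨y, hy⟩ := LinearMap.range_eq_top.1 hsurj fun i => (K i).mkQ (x i)
  refine ⟨y, fun i j hj => ?_⟩
  have hi : y - x i ∈ K i := (Submodule.Quotient.eq _).1 (congrFun hy i)
  simp only [hK, Submodule.mem_iInf] at hi
  have := hi j hj
  rw [LinearMap.mem_ker, map_sub] at this
  linarith

lemma exists_glue (A : Arrangement ℓ ι) {r : ℕ} (P : Fin r → Finset ι)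
    (hcover : ∀ j : ι, ∃ i, j ∈ P i) (hrnk : A.rnk = ∑ i, A.rnkOn (P i))
    (D : ∀ i, (A.restrict (P i)).Ch) :
    ∃ C : A.Ch, ∀ i (j : {j // j ∈ P i}) σ,
      A.eps j.1 σ C = (A.restrict (P i)).eps j σ (D i) := by
  choose x hx hD using fun i => (A.restrict (P i)).exists_chamberOf (D i)
  obtain ⟨y, hy⟩ := A.exists_common_point P hcover hrnk x
  have hyc : y ∈ A.Complement := fun j => by
    obtain ⟨i, hi⟩ := hcover j
    rw [hy i j hi]
    exact hx i ⟨j, hi⟩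
  refine ⟨A.chamberOf y hyc, fun i j σ => ?_⟩
  rw [hD i, eps_chamberOf, eps_chamberOf, hy i j.1 j.2]
  rfl

/-- Admissibility in the form in which it is used: equal `j`-th signs of the inputs give equal
`j`-th signs of the outputs. -/
lemma IsAdmissible.congr {A : Arrangement ℓ ι} {m : ℕ} {Φ : (Fin m → A.Ch) → A.Ch}
    (h : A.IsAdmissible m Φ) (j : ι) (σ : ℤˣ) {C D : Fin m → A.Ch}
    (hCD : ∀ k, A.eps j σ (C k) = A.eps j σ (D k)) : A.eps j σ (Φ C) = A.eps j σ (Φ D) := by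
  obtain ⟨φ, -, hφ⟩ := h
  rw [hφ, hφ, funext hCD]

end Geometry

end Arrangement

/-- **Theorem (decomposition of admissible maps).** If a nonempty real central arrangement
decomposes as `𝒜 = 𝒜₁ ⊎ ⋯ ⊎ 𝒜_r` into nonempty indecomposable arrangements, then there is a
bijection `AM(𝒜, m) ≃ AM(𝒜₁, m) × ⋯ × AM(𝒜_r, m)`. -/
theorem am_decomposition {ℓ : ℕ} {ι : Type} [Fintype ι] [Nonempty ι] (A : Arrangement ℓ ι)
    (r : ℕ) (P : Fin r → Finset ι)
    (hne : ∀ i, (P i).Nonempty)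
    (hdisj : Pairwise fun i k => Disjoint (P i) (P k))
    (hcover : ∀ j : ι, ∃ i, j ∈ P i)
    (hrnk : A.rnk = ∑ i, A.rnkOn (P i))
    (hind : ∀ i, A.IndecomposableOn (P i))
    (m : ℕ) (hm : 0 < m) :
    Nonempty (({Φ : (Fin m → A.Ch) → A.Ch // A.IsAdmissible m Φ}) ≃
      (∀ i : Fin r, {Φ : (Fin m → (A.restrict (P i)).Ch) → (A.restrict (P i)).Ch //
        (A.restrict (P i)).IsAdmissible m Φ})) := by
  choose res hres using fun i => A.exists_res (P i)
  choose glue hglue using A.exists_glue P hcover hrnk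
  choose block hblock using hcover
  have hCh : Nonempty A.Ch := by
    obtain ⟨x, hx⟩ := Module.Dual.exists_forall_ne_zero_of_forall_exists A.form
      (fun j => by
        by_contra! h
        exact A.form_ne_zero j (LinearMap.ext h))
    exact ⟨A.chamberOf x hx⟩
  obtain ⟨C₀⟩ := hCh
  -- A section of `res i`: glue the given chamber with the restrictions of `C₀` to the other blocks.
  let lift : ∀ i, (A.restrict (P i)).Ch → A.Ch := fun i D =>
    glue (Function.update (fun k => res k C₀) i D)
  have hlift : ∀ i (j : {j // j ∈ P i}) σ D,
      A.eps j.1 σ (lift i D) = (A.restrict (P i)).eps j σ D := fun i j σ D => by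
    simp only [lift]
    rw [hglue _ i j σ, Function.update_self]
  refine ⟨{
    toFun := fun Φ i => ⟨fun D => res i (Φ.1 fun k => lift i (D k)), ?_⟩
    invFun := fun Ψ => ⟨fun C => glue fun i => (Ψ i).1 fun k => res i (C k), ?_⟩
    left_inv := fun Φ => ?_
    right_inv := fun Ψ => ?_ }⟩
  · obtain ⟨φ, hφ1, hφ⟩ := Φ.2
    refine ⟨fun j => φ j.1, fun j => hφ1 j.1, fun j σ D => ?_⟩
    rw [hres, hφ]
    simp only [hlift]
  · choose ψ hψ1 hψ using fun i => (Ψ i).2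
    refine ⟨fun j => ψ (block j) ⟨j, hblock j⟩, fun j => hψ1 _ _, fun j σ C => ?_⟩
    rw [hglue _ (block j) ⟨j, hblock j⟩, hψ]
    simp only [hres]
  · refine Subtype.ext (funext fun C => A.ch_ext fun j => ?_)
    change A.eps j 1 (glue fun i => res i (Φ.1 fun k => lift i (res i (C k)))) = _
    rw [hglue _ (block j) ⟨j, hblock j⟩, hres]
    refine Φ.2.congr j 1 fun k => ?_
    rw [hlift (block j) ⟨j, hblock j⟩, hres]
  · refine funext fun i => Subtype.ext (funext fun D => (A.restrict (P i)).ch_ext fun j => ?_)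
    change (A.restrict (P i)).eps j 1
      (res i (glue fun i' => (Ψ i').1 fun k => res i' (lift i (D k)))) = _
    rw [hres, hglue _ i j]
    refine (Ψ i).2.congr j 1 fun k => ?_
    rw [hres, hlift]
end
end

section
/- Let 𝒜 be a nonempty indecomposable real central arrangement of hyperplanes in ℝ^ℓ with |𝒜| ≥ 3, and let m be a positive integer. Then every admissible map Φ : Ch^m → Ch is projective, i.e., Φ is the projection onto the h-th component for some h ∈ {1,…,m}. -/
/-!
A chamber is determined by its signs on the hyperplanes, so an admissible map amounts to a
family of maps `φ j : {±1}^m → {±1}` that are unanimous (`φ j` fixes both constant vectors)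
and together send realizable sign vectors to realizable ones.

On a circuit, that is a support-minimal relation `∑ cᵢ αᵢ = 0`, every sign pattern is realized
by a chamber except the two that make all `cᵢ αᵢ` have the same sign
(`Arrangement.IsCircuitRel.exists_chamber`, `Arrangement.IsCircuitRel.not_const`). A circuit has
at least three elements since the hyperplanes are distinct. After twisting by the signs of `c`
this is an Arrow-type situation: columns that are not constant yield an outcome that is not
constant. Then all `φ j` on the circuit agree, are odd, and their winning coalitions form an
ultrafilter on the finite set of voters, hence the maps are a common projection
(`exists_dictator`).

Finally, indecomposability provides a circuit across any bipartition of the arrangement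
(`Arrangement.Indecomposable.exists_circuit`): if the ranks do not add up, some nonzero form
lies in the span of both parts, and among the relations whose part over one side is a nonzero
form, one of smallest support is a circuit. Hence the dictator is the same for all hyperplanes.
-/

noncomputable section
attribute [local instance] Classical.propDecidable

/-! ### Signs of chambers -/

namespace Arrangement

variable {ℓ : ℕ} {ι : Type} [Fintype ι]

/-- The sign of a real number as a unit of `ℤ`; the value at `0` is `-1`. -/
def sgn (r : ℝ) : ℤˣ := if 0 < r then 1 else -1

lemma sgn_eq_one_iff {r : ℝ} : sgn r = 1 ↔ 0 < r := by
  unfold sgn; split_ifs with h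
  · simp [h]
  · simp only [h, iff_false]; decide

lemma sgn_eq_neg_one_iff {r : ℝ} : sgn r = -1 ↔ r ≤ 0 := by
  unfold sgn; split_ifs with h
  · simp only [not_le.mpr h, iff_false]; decide
  · simpa using h

lemma sgn_eq_of_mul_pos {r t : ℝ} (h : 0 < r * t) : sgn r = sgn t := by
  rcases pos_and_pos_or_neg_and_neg_of_mul_pos h with ⟨h1, h2⟩ | ⟨h1, h2⟩
  · rw [sgn_eq_one_iff.2 h1, sgn_eq_one_iff.2 h2]
  · rw [sgn_eq_neg_one_iff.2 h1.le, sgn_eq_neg_one_iff.2 h2.le]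

lemma units_ne_neg_self (u : ℤˣ) : u ≠ -u := by
  rcases Int.units_eq_one_or u with rfl | rfl <;> decide

lemma sgn_eq_neg_of_mul_neg {r t : ℝ} (h : r * t < 0) : sgn r = -sgn t := by
  rcases mul_neg_iff.1 h with ⟨h1, h2⟩ | ⟨h1, h2⟩
  · rw [sgn_eq_one_iff.2 h1, sgn_eq_neg_one_iff.2 h2.le, neg_neg]
  · rw [sgn_eq_neg_one_iff.2 h1.le, sgn_eq_one_iff.2 h2]

lemma mul_pos_of_sgn_eq {r t : ℝ} (hr : r ≠ 0) (ht : t ≠ 0) (h : sgn r = sgn t) :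
    0 < r * t := by
  rcases lt_or_gt_of_ne hr with hr | hr
  · rw [sgn_eq_neg_one_iff.2 hr.le, eq_comm, sgn_eq_neg_one_iff] at h
    exact mul_pos_of_neg_of_neg hr (lt_of_le_of_ne h ht)
  · rw [sgn_eq_one_iff.2 hr, eq_comm, sgn_eq_one_iff] at h
    exact mul_pos hr h

variable (A : Arrangement ℓ ι)

/-- A linear form does not change sign on a connected component of the complement. -/
lemma mul_form_pos {x y : Fin ℓ → ℝ} (hx : x ∈ A.Complement)
    (hy : y ∈ connectedComponentIn A.Complement x) (j : ι) :
    0 < A.form j x * A.form j y := by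
  have hc : ContinuousOn (fun z => A.form j x * A.form j z)
      (connectedComponentIn A.Complement x) :=
    (continuous_const.mul (LinearMap.continuous_of_finiteDimensional (A.form j))).continuousOn
  have hpre := (isPreconnected_connectedComponentIn (F := A.Complement) (x := x)).image _ hc
  by_contra hneg
  have h0 : (0 : ℝ) ∈ (fun z => A.form j x * A.form j z) ''
      (connectedComponentIn A.Complement x) :=
    hpre.ordConnected.out (Set.mem_image_of_mem _ hy)
      (Set.mem_image_of_mem _ (mem_connectedComponentIn hx))
      ⟨not_lt.1 hneg, mul_self_nonneg _⟩
  obtain ⟨z, hz, hz0⟩ := h0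
  rcases mul_eq_zero.1 hz0 with h | h
  · exact hx j h
  · exact connectedComponentIn_subset _ _ hz j h

/-- Points of the complement with the same signs lie in the same component, because the
region cut out by the signs is convex. -/
lemma mem_component {x y : Fin ℓ → ℝ} (hx : x ∈ A.Complement)
    (h : ∀ j, 0 < A.form j x * A.form j y) :
    y ∈ connectedComponentIn A.Complement x := by
  have hconv : Convex ℝ {z | ∀ j, 0 < A.form j x * A.form j z} := by
    intro u hu v hv a b ha hb hab j
    have h1 := hu j
    have h2 := hv j
    simp only [map_add, map_smul, smul_eq_mul]
    rcases ha.eq_or_lt with rfl | ha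
    · have : b = 1 := by linarith
      subst this; simpa using h2
    · have := mul_pos ha h1
      have := mul_nonneg hb h2.le
      nlinarith
  refine hconv.isPreconnected.subset_connectedComponentIn
    (fun j => mul_self_pos.2 (hx j)) ?_ h
  intro z hz j h0
  have := hz j
  rw [h0, mul_zero] at this
  exact lt_irrefl _ this

lemma eps_eq (C : A.Ch) {y : Fin ℓ → ℝ} (hy : y ∈ C.1) (j : ι) (σ : ℤˣ) :
    A.eps j σ C = σ * sgn (A.form j y) := by
  obtain ⟨C, x, hx, rfl⟩ := C
  have key : (∀ z ∈ connectedComponentIn A.Complement x, 0 < A.form j z) ↔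
      0 < A.form j y := by
    refine ⟨fun h => h y hy, fun h z hz => ?_⟩
    have h1 := A.mul_form_pos hx hy j
    have h2 := A.mul_form_pos hx hz j
    exact (pos_iff_pos_of_mul_pos h2).1 ((pos_iff_pos_of_mul_pos h1).2 h)
  simp only [eps, sgn, key]

lemma exists_point (C : A.Ch) :
    ∃ x ∈ C.1, x ∈ A.Complement ∧ C.1 = connectedComponentIn A.Complement x := by
  obtain ⟨C, x, hx, rfl⟩ := C
  exact ⟨x, mem_connectedComponentIn hx, hx, rfl⟩

/-- A chamber is determined by its signs. -/
lemma chamber_ext {C D : A.Ch} (h : ∀ j, A.eps j 1 C = A.eps j 1 D) : C = D := by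
  obtain ⟨x, hxC, hx, hCx⟩ := A.exists_point C
  obtain ⟨y, hyD, hy, hDy⟩ := A.exists_point D
  apply Subtype.ext
  rw [hCx, hDy]
  refine connectedComponentIn_eq (A.mem_component hx fun j => ?_)
  have := h j
  rw [A.eps_eq C hxC, A.eps_eq D hyD, one_mul, one_mul] at this
  exact mul_pos_of_sgn_eq (hx j) (hy j) this

/-- Every point can be moved off the hyperplanes without changing its nonzero signs. -/
lemma exists_chamber_of_point (x : Fin ℓ → ℝ) :
    ∃ C : A.Ch, ∀ j, A.form j x ≠ 0 → A.eps j 1 C = sgn (A.form j x) := by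
  obtain ⟨u, hu⟩ : ∃ u, ∀ j, A.form j u ≠ 0 :=
    Module.Dual.exists_forall_ne_zero_of_forall_exists A.form fun j => by
      by_contra! h
      exact A.form_ne_zero j (LinearMap.ext h)
  -- Move from `x` a short way in the generic direction `u`.
  have hev : ∀ j, ∀ᶠ t : ℝ in nhdsWithin 0 (Set.Ioi 0), A.form j (x + t • u) ≠ 0 ∧
      (A.form j x ≠ 0 → 0 < A.form j x * A.form j (x + t • u)) := by
    intro j
    by_cases h0 : A.form j x = 0
    · filter_upwards [self_mem_nhdsWithin] with t ht
      simp [h0, hu j, (show (0 : ℝ) < t from ht).ne']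
    · have hc : ContinuousAt (fun t : ℝ => A.form j x * A.form j (x + t • u)) 0 := by
        simp only [map_add, map_smul, smul_eq_mul]
        fun_prop
      have hpos : 0 < A.form j x * A.form j (x + (0 : ℝ) • u) := by
        simpa using mul_self_pos.2 h0
      filter_upwards [nhdsWithin_le_nhds (hc.eventually_const_lt hpos)] with t ht
      exact ⟨fun h => by rw [h, mul_zero] at ht; exact lt_irrefl _ ht, fun _ => ht⟩
  obtain ⟨t, ht⟩ := (Filter.eventually_all.2 hev).exists
  have hz : x + t • u ∈ A.Complement := fun j => (ht j).1
  refine ⟨⟨_, _, hz, rfl⟩, fun j hj => ?_⟩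
  rw [A.eps_eq _ (mem_connectedComponentIn hz), one_mul]
  exact (sgn_eq_of_mul_pos ((ht j).2 hj)).symm

/-! ### Circuits -/

/-- A linear relation among the forms whose support is inclusion-minimal: the coefficient
vector of a circuit of the arrangement. -/
structure IsCircuitRel (c : ι → ℝ) : Prop where
  ne_zero : ∃ i, c i ≠ 0
  rel : ∑ i, c i • A.form i = 0
  minimal : ∀ d : ι → ℝ, ∑ i, d i • A.form i = 0 → (∀ i, c i = 0 → d i = 0) →
    (∃ i, c i ≠ 0 ∧ d i = 0) → d = 0

variable {A}

namespace IsCircuitRel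

variable {c : ι → ℝ}

/-- The only linear constraint on the values of the forms of a circuit is the circuit
relation itself. -/
lemma exists_values (hc : A.IsCircuitRel c) (w : ι → ℝ) (hw : ∑ i, w i = 0)
    (hsupp : ∀ i, c i = 0 → w i = 0) : ∃ x, ∀ i, c i * A.form i x = w i := by
  let L : (Fin ℓ → ℝ) →ₗ[ℝ] (ι → ℝ) := LinearMap.pi fun i => c i • A.form i
  by_contra hne
  have hmem : w ∉ LinearMap.range L := by
    rintro ⟨x, rfl⟩
    exact hne ⟨x, fun i => rfl⟩
  obtain ⟨f, hfw, hf⟩ := Submodule.exists_le_ker_of_notMem hmem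
  have hf_apply : ∀ v : ι → ℝ, f v = ∑ i, v i * f (Pi.single i 1) := fun v => by
    rw [LinearMap.pi_apply_eq_sum_univ f v]
    refine Finset.sum_congr rfl fun i _ => ?_
    rw [smul_eq_mul]
    congr 2
    ext k
    simp [Pi.single_apply, eq_comm]
  obtain ⟨i₀, hi₀⟩ := hc.ne_zero
  -- Subtracting a multiple of `c` from the relation given by `f` makes it vanish at `i₀`.
  have hd : (fun i => (f (Pi.single i 1) - f (Pi.single i₀ 1)) * c i) = 0 := by
    refine hc.minimal _ ?_ (fun i hi => by simp [hi]) ⟨i₀, hi₀, by simp⟩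
    refine LinearMap.ext fun x => ?_
    have h1 : f (L x) = 0 := hf ⟨x, rfl⟩
    rw [hf_apply] at h1
    have h2 : (∑ i, c i • A.form i) x = 0 := by rw [hc.rel]; rfl
    simp only [L, LinearMap.pi_apply, LinearMap.sum_apply, LinearMap.smul_apply,
      smul_eq_mul, LinearMap.zero_apply] at h1 h2 ⊢
    calc _ = ∑ i, c i * A.form i x * f (Pi.single i 1)
          - f (Pi.single i₀ 1) * ∑ i, c i * A.form i x := by
          rw [Finset.mul_sum, ← Finset.sum_sub_distrib]
          exact Finset.sum_congr rfl fun i _ => by ring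
      _ = 0 := by rw [h1, h2, mul_zero, sub_zero]
  apply hfw
  rw [hf_apply]
  have : ∀ i, w i * f (Pi.single i 1) = w i * f (Pi.single i₀ 1) := fun i => by
    by_cases hi : c i = 0
    · simp [hsupp i hi]
    · have := congrFun hd i
      simp only [Pi.zero_apply, mul_eq_zero, hi, or_false] at this
      rw [sub_eq_zero.1 this]
  rw [Finset.sum_congr rfl fun i _ => this i, ← Finset.sum_mul, hw, zero_mul]

/-- Every sign pattern on a circuit is realized by a chamber, except the two patterns that
contradict the circuit relation. -/
lemma exists_chamber (hc : A.IsCircuitRel c) (s : ι → ℤˣ)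
    (hpos : ∃ i, c i ≠ 0 ∧ s i = sgn (c i)) (hneg : ∃ i, c i ≠ 0 ∧ s i = -sgn (c i)) :
    ∃ C : A.Ch, ∀ i, c i ≠ 0 → A.eps i 1 C = s i := by
  let P := Finset.univ.filter fun i => c i ≠ 0 ∧ s i = sgn (c i)
  let N := Finset.univ.filter fun i => c i ≠ 0 ∧ s i = -sgn (c i)
  have hP : 0 < (P.card : ℝ) := by
    obtain ⟨i, hi⟩ := hpos
    exact_mod_cast Finset.card_pos.2 ⟨i, by simpa [P] using hi⟩
  have hN : 0 < (N.card : ℝ) := by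
    obtain ⟨i, hi⟩ := hneg
    exact_mod_cast Finset.card_pos.2 ⟨i, by simpa [N] using hi⟩
  have hPN : ∀ i ∈ P, i ∉ N := by
    intro i hi hi'
    have h1 := (Finset.mem_filter.1 hi).2.2
    have h2 := (Finset.mem_filter.1 hi').2.2
    rw [h1] at h2
    exact units_ne_neg_self _ h2
  -- Weights with the prescribed signs whose total is `|P| * |N| - |N| * |P| = 0`.
  obtain ⟨x, hx⟩ := hc.exists_values
    (fun i => (if i ∈ P then (N.card : ℝ) else 0) - (if i ∈ N then (P.card : ℝ) else 0))
    (by simp [Finset.sum_sub_distrib, mul_comm])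
    (fun i hi => by simp [P, N, hi])
  have key : ∀ i, c i ≠ 0 → A.form i x ≠ 0 ∧ sgn (A.form i x) = s i := by
    intro i hi
    have hxi := hx i
    rcases Int.units_eq_one_or (s i * sgn (c i)) with h | h
    · have hs : s i = sgn (c i) := by
        rw [← mul_one (sgn (c i)), ← h, mul_left_comm, Int.units_mul_self, mul_one]
      have hiP : i ∈ P := by simp [P, hi, hs]
      have hlt : 0 < c i * A.form i x := by rw [hxi]; simp [hiP, hPN i hiP, hN]
      exact ⟨right_ne_zero_of_mul hlt.ne', by rw [hs, sgn_eq_of_mul_pos hlt]⟩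
    · have hs : s i = -sgn (c i) := by
        rw [← mul_one (sgn (c i)), ← mul_neg, ← h, mul_left_comm, Int.units_mul_self, mul_one]
      have hiN : i ∈ N := by simp [N, hi, hs]
      have hiP : i ∉ P := fun h' => hPN i h' hiN
      have hlt : c i * A.form i x < 0 := by rw [hxi]; simp [hiP, hiN, hP]
      exact ⟨right_ne_zero_of_mul hlt.ne,
        by rw [hs, sgn_eq_neg_of_mul_neg hlt, neg_neg]⟩
  obtain ⟨C, hC⟩ := A.exists_chamber_of_point x
  exact ⟨C, fun i hi => by rw [hC i (key i hi).1, (key i hi).2]⟩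

/-- A chamber cannot have all signs on a circuit equal to those of the coefficients, nor all
opposite to them. -/
lemma not_const (hc : A.IsCircuitRel c) (C : A.Ch) (τ : ℤˣ) :
    ∃ i, c i ≠ 0 ∧ sgn (c i) * A.eps i 1 C ≠ τ := by
  by_contra! h
  obtain ⟨x, hxC, hx, -⟩ := A.exists_point C
  have hrel : ∑ i, c i * A.form i x = 0 := by
    have := congrArg (fun g => g x) hc.rel
    simpa using this
  obtain ⟨i₀, hi₀⟩ := hc.ne_zero
  have hs : ∀ i, c i ≠ 0 → sgn (A.form i x) = sgn (c i) * τ := fun i hi => by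
    rw [← h i hi, ← mul_assoc, Int.units_mul_self, one_mul, A.eps_eq C hxC, one_mul]
  rcases Int.units_eq_one_or τ with rfl | rfl
  · have hpos : ∀ i, c i ≠ 0 → 0 < c i * A.form i x := fun i hi =>
      mul_pos_of_sgn_eq hi (hx i) (by rw [hs i hi, mul_one])
    refine (Finset.sum_pos' (fun i _ => ?_) ⟨i₀, Finset.mem_univ _, hpos i₀ hi₀⟩).ne' hrel
    by_cases hi : c i = 0
    · simp [hi]
    · exact (hpos i hi).le
  · have hneg : ∀ i, c i ≠ 0 → c i * A.form i x < 0 := fun i hi => by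
      rcases lt_or_gt_of_ne (mul_ne_zero hi (hx i)) with h' | h'
      · exact h'
      · have h1 := sgn_eq_of_mul_pos h'
        rw [hs i hi, mul_neg, mul_one] at h1
        exact absurd h1 (units_ne_neg_self _)
    refine (Finset.sum_neg' (fun i _ => ?_) ⟨i₀, Finset.mem_univ _, hneg i₀ hi₀⟩).ne hrel
    by_cases hi : c i = 0
    · simp [hi]
    · exact (hneg i hi).le

/-- The forms are nonzero and pairwise non-proportional, so a circuit has at least three
elements. -/
lemma exists_third (hc : A.IsCircuitRel c) (i j : ι) : ∃ k, c k ≠ 0 ∧ k ≠ i ∧ k ≠ j := by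
  by_contra! h
  obtain ⟨a, ha⟩ := hc.ne_zero
  have hrel := hc.rel
  by_cases hb : ∃ b, b ≠ a ∧ c b ≠ 0
  · obtain ⟨b, hba, hb⟩ := hb
    have hout : ∀ k, k ∉ ({a, b} : Finset ι) → c k = 0 := by
      intro k hk
      simp only [Finset.mem_insert, Finset.mem_singleton, not_or] at hk
      by_contra hk0
      have h1 := h a ha
      have h2 := h b hb
      have h3 := h k hk0
      by_cases e1 : a = i <;> by_cases e2 : b = i <;> by_cases e3 : k = i <;> simp_all
    rw [← Finset.sum_subset (Finset.subset_univ {a, b})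
      (fun k _ hk => by rw [hout k hk, zero_smul]), Finset.sum_pair hba.symm] at hrel
    refine hba (A.ker_injective b a ?_)
    ext x
    have hx := congrArg (fun g => g x) hrel
    simp only [LinearMap.add_apply, LinearMap.smul_apply, smul_eq_mul,
      LinearMap.zero_apply] at hx
    simp only [LinearMap.mem_ker]
    constructor <;> intro h0 <;> simpa [h0, ha, hb] using hx
  · push Not at hb
    rw [Finset.sum_eq_single a (fun k _ hk => by rw [hb k hk, zero_smul]) (by simp)] at hrel
    exact (smul_ne_zero ha (A.form_ne_zero a)) hrel

end IsCircuitRel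

/-- Across any bipartition of an indecomposable arrangement there is a circuit. -/
lemma Indecomposable.exists_circuit (hA : A.Indecomposable) (S : Finset ι)
    (hS : S.Nonempty) (hS' : Sᶜ.Nonempty) :
    ∃ c, A.IsCircuitRel c ∧ (∃ i ∈ S, c i ≠ 0) ∧ ∃ i ∉ S, c i ≠ 0 := by
  let K : Finset ι → Submodule ℝ (Fin ℓ → ℝ) := fun T => ⨅ j ∈ T, LinearMap.ker (A.form j)
  -- If the two intersections spanned everything, the ranks would add up.
  have hlt : K S ⊔ K Sᶜ < ⊤ := by
    refine lt_top_iff_ne_top.2 fun htop => hA ⟨S, Sᶜ, hS, hS', disjoint_compl_right,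
      Finset.union_compl S, ?_⟩
    have hinf : K Finset.univ = K S ⊓ K Sᶜ := by
      simp only [K]
      rw [← Finset.iInf_union, Finset.union_compl]
    have hdim := Submodule.finrank_sup_add_finrank_inf_eq (K S) (K Sᶜ)
    rw [htop, finrank_top, Module.finrank_fin_fun, ← hinf] at hdim
    have h1 := (K S).finrank_le
    have h2 := (K Sᶜ).finrank_le
    rw [Module.finrank_fin_fun] at h1 h2
    change ℓ - Module.finrank ℝ (K Finset.univ) =
      (ℓ - Module.finrank ℝ (K S)) + (ℓ - Module.finrank ℝ (K Sᶜ))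
    omega
  obtain ⟨β, hβ0, hβ⟩ := Submodule.exists_le_ker_of_lt_top _ hlt
  have hspan : ∀ T : Finset ι, K T ≤ LinearMap.ker β →
      ∃ a : ι → ℝ, ∑ i ∈ T, a i • A.form i = β := by
    intro T hT
    have hm : β ∈ Submodule.span ℝ (Set.range fun i : T => A.form i) := by
      refine mem_span_of_iInf_ker_le_ker (le_trans (le_of_eq ?_) hT)
      simp only [K, iInf_subtype]
    obtain ⟨a, ha⟩ := (Submodule.mem_span_range_iff_exists_fun ℝ).1 hm
    refine ⟨fun i => if h : i ∈ T then a ⟨i, h⟩ else 0, ?_⟩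
    rw [← ha, ← Finset.sum_coe_sort T]
    exact Finset.sum_congr rfl fun i _ => by simp
  obtain ⟨a, ha⟩ := hspan S (le_sup_left.trans hβ)
  obtain ⟨b, hb⟩ := hspan Sᶜ (le_sup_right.trans hβ)
  -- Relations whose part over `S` is a nonzero form; a support-minimal one is a circuit.
  let Q : Set (ι → ℝ) := {c | ∑ i, c i • A.form i = 0 ∧ ∑ i ∈ S, c i • A.form i ≠ 0}
  let supp : (ι → ℝ) → Finset ι := fun c => Finset.univ.filter fun i => c i ≠ 0
  have hQ : Q.Nonempty := by
    have h1 : ∑ i ∈ S, (if i ∈ S then a i else -b i) • A.form i = β := by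
      rw [← ha]
      exact Finset.sum_congr rfl fun i hi => by rw [if_pos hi]
    have h2 : ∑ i ∈ Sᶜ, (if i ∈ S then a i else -b i) • A.form i = -β := by
      rw [← hb, ← Finset.sum_neg_distrib]
      exact Finset.sum_congr rfl fun i hi => by
        rw [if_neg (Finset.mem_compl.1 hi)]
        ext x
        simp
    refine ⟨fun i => if i ∈ S then a i else -b i, ?_, ?_⟩
    · rw [← Finset.sum_add_sum_compl S, h1, h2, add_neg_cancel]
    · rw [h1]; exact hβ0
  obtain ⟨c, ⟨hc1, hc2⟩, hcmin⟩ := (measure fun c => (supp c).card).wf.has_min Q hQ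
  have hmin : ∀ d ∈ Q, (∀ i, c i = 0 → d i = 0) → ∀ i, c i ≠ 0 → d i ≠ 0 := by
    intro d hd hsub i hi hdi
    refine hcmin d hd (Finset.card_lt_card ?_)
    refine Finset.ssubset_iff_subset_ne.2 ⟨fun k hk => ?_, fun he => ?_⟩
    · simp only [supp, Finset.mem_filter, Finset.mem_univ, true_and] at hk ⊢
      exact fun h => hk (hsub k h)
    · have : i ∈ supp d := by rw [he]; simpa [supp] using hi
      simp [supp, hdi] at this
  have hlin : ∀ (T : Finset ι) (d : ι → ℝ) (t : ℝ), ∑ i ∈ T, (c i - t * d i) • A.form i =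
      ∑ i ∈ T, c i • A.form i - t • ∑ i ∈ T, d i • A.form i := by
    intro T d t
    refine LinearMap.ext fun x => ?_
    simp only [LinearMap.sum_apply, LinearMap.sub_apply, LinearMap.smul_apply, smul_eq_mul,
      Finset.mul_sum, ← Finset.sum_sub_distrib]
    exact Finset.sum_congr rfl fun i _ => by ring
  obtain ⟨i, hiS, hi⟩ : ∃ i ∈ S, c i ≠ 0 := by
    by_contra! h
    exact hc2 (Finset.sum_eq_zero fun i hi => by rw [h i hi, zero_smul])
  refine ⟨c, ⟨⟨i, hi⟩, hc1, ?_⟩, ⟨i, hiS, hi⟩, ?_⟩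
  · rintro d hd hsub ⟨i₀, hi₀, hdi₀⟩
    by_contra hd0
    obtain ⟨i₁, hi₁⟩ := Function.ne_iff.1 hd0
    have hi₁ : d i₁ ≠ 0 := hi₁
    by_cases hdS : ∑ i ∈ S, d i • A.form i = 0
    -- Removing a multiple of `d` kills the coefficient at `i₁` and keeps the part over `S`.
    · refine hmin (fun i => c i - c i₁ / d i₁ * d i) ⟨?_, ?_⟩ (fun k hk => ?_) i₁
        (fun h => hi₁ (hsub i₁ h)) ?_
      · rw [hlin, hc1, hd, smul_zero, sub_zero]
      · rw [hlin, hdS, smul_zero, sub_zero]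
        exact hc2
      · simp [hk, hsub k hk]
      · field_simp; simp
    · exact hmin d ⟨hd, hdS⟩ hsub i₀ hi₀ hdi₀
  · by_contra! h
    refine hc2 ?_
    rw [← hc1]
    exact Finset.sum_subset (Finset.subset_univ S) fun k _ hk => by rw [h k hk, zero_smul]

end Arrangement

/-! ### Dictators -/

/-- If unanimous maps `f i : {±1}^m → {±1}`, for `i` in a set with at least three elements,
never send a family of columns none of which is constant to a constant column, then they
are all the same projection. The maps turn out to be equal and odd, and the sets on which
they take the value `1` form an ultrafilter on the finite set of voters. -/
lemma exists_dictator {κ : Type*} {m : ℕ} (S : Set κ) (hS : S.Nonempty)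
    (f : κ → (Fin m → ℤˣ) → ℤˣ)
    (hpos : ∀ i ∈ S, f i (fun _ => 1) = 1) (hneg : ∀ i ∈ S, f i (fun _ => -1) = -1)
    (three : ∀ i j, ∃ k ∈ S, k ≠ i ∧ k ≠ j)
    (H : ∀ X : κ → Fin m → ℤˣ, (∀ p τ, ∃ i ∈ S, X i p = τ) → ∀ τ, ∃ i ∈ S, f i (X i) ≠ τ) :
    ∃ h, ∀ i ∈ S, ∀ x, f i x = x h := by
  -- Opposite votes on two members, with all others unanimous, give opposite outcomes.
  have hopp : ∀ i ∈ S, ∀ j ∈ S, i ≠ j → ∀ x, f j (fun p => -x p) = -f i x := by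
    intro i hi j hj hij x
    by_contra hne
    have heq : f j (fun p => -x p) = f i x := by
      rcases Int.units_eq_one_or (f j (fun p => -x p)) with h | h <;>
      rcases Int.units_eq_one_or (f i x) with h' | h' <;> simp_all
    obtain ⟨k, hk, hk'⟩ := H (fun k p => if k = i then x p else if k = j then -x p else f i x)
      (fun p τ => by
        by_cases hx : x p = τ
        · exact ⟨i, hi, by simp [hx]⟩
        · refine ⟨j, hj, ?_⟩
          simp only [hij.symm, if_false, if_true]
          rw [Int.units_ne_iff_eq_neg.1 hx, neg_neg]) (f i x)
    apply hk'
    by_cases h1 : k = i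
    · subst h1; simp
    by_cases h2 : k = j
    · subst h2; simpa [h1] using heq
    · simp only [h1, h2, if_false]
      rcases Int.units_eq_one_or (f i x) with h | h <;> rw [h]
      · exact hpos k hk
      · exact hneg k hk
  obtain ⟨a, ha⟩ := hS
  have hsame : ∀ i ∈ S, ∀ x, f i x = f a x := by
    intro i hi x
    obtain ⟨k, hk, hki, hka⟩ := three i a
    have h1 := hopp i hi k hk hki.symm x
    have h2 := hopp a ha k hk hka.symm x
    exact neg_injective (h1.symm.trans h2)
  have hodd : ∀ x, f a (fun p => -x p) = -f a x := by
    intro x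
    obtain ⟨k, hk, hka, -⟩ := three a a
    rw [← hsame k hk, hopp a ha k hk hka.symm]
  -- The winning coalitions are closed under intersection.
  have hinter : ∀ x y, f a x = 1 → f a y = 1 →
      f a (fun p => if x p = 1 ∧ y p = 1 then 1 else -1) = 1 := by
    intro x y hx hy
    by_contra hne
    obtain ⟨b, hb, hba, -⟩ := three a a
    obtain ⟨d, hd, hda, hdb⟩ := three a b
    obtain ⟨k, hk, hk'⟩ := H (fun k p => if k = a then x p else if k = b then y p else
        -(if x p = 1 ∧ y p = 1 then 1 else -1))
      (fun p τ => by
        by_contra! h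
        have h1 := h a ha
        have h2 := h b hb
        have h3 := h d hd
        simp only [if_true, hba, if_false, hda, hdb] at h1 h2 h3
        rcases Int.units_eq_one_or (x p) with e1 | e1 <;>
        rcases Int.units_eq_one_or (y p) with e2 | e2 <;>
        rcases Int.units_eq_one_or τ with e3 | e3 <;>
        simp [e1, e2, e3] at h1 h2 h3) 1
    apply hk'
    rw [hsame k hk]
    by_cases h1 : k = a
    · simpa [h1] using hx
    by_cases h2 : k = b
    · subst h2; simpa [h1] using hy
    · simp only [h1, h2, if_false]
      rw [hodd, Int.units_ne_iff_eq_neg.1 hne, neg_neg]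
  -- Some complement of a singleton is not winning, so that singleton is.
  obtain ⟨h, hh⟩ : ∃ h : Fin m, f a (fun p => if p = h then 1 else -1) = 1 := by
    by_contra! hno
    have hT : ∀ T : Finset (Fin m), f a (fun p => if p ∈ T then -1 else 1) = 1 := by
      intro T
      induction T using Finset.induction_on with
      | empty => simpa using hpos a ha
      | insert q T _ ih =>
        have hq : f a (fun p => if p = q then -1 else 1) = 1 := by
          have h1 := hodd (fun p => if p = q then 1 else -1)
          rw [Int.units_ne_iff_eq_neg.1 (hno q), neg_neg] at h1
          convert h1 using 3
          split_ifs <;> simp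
        have h2 := hinter _ _ hq ih
        convert h2 using 2
        funext p
        by_cases e1 : p = q <;> by_cases e2 : p ∈ T <;> simp [e1, e2]
    have h1 := hT Finset.univ
    simp only [Finset.mem_univ, if_true, hneg a ha] at h1
    exact absurd h1 (by decide)
  have hwin : ∀ x : Fin m → ℤˣ, f a x = 1 → x h = 1 := by
    intro x hx
    by_contra hxh
    have h1 := hinter _ _ hx hh
    have h2 : (fun p => if x p = 1 ∧ (if p = h then (1 : ℤˣ) else -1) = 1 then (1 : ℤˣ) else -1)
        = fun _ => -1 := by
      funext p
      by_cases e : p = h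
      · subst e; simp [hxh]
      · simp [e]
    rw [h2, hneg a ha] at h1
    exact absurd h1 (by decide)
  refine ⟨h, fun i hi x => ?_⟩
  rw [hsame i hi]
  rcases Int.units_eq_one_or (f a x) with e | e
  · rw [e, hwin x e]
  · have h1 := hwin (fun p => -x p) (by rw [hodd, e, neg_neg])
    rw [e, ← h1, neg_neg]

namespace Arrangement

variable {ℓ : ℕ} {ι : Type} [Fintype ι] {A : Arrangement ℓ ι}

lemma exists_chamber_neg (j : ι) : ∃ C : A.Ch, A.eps j 1 C = -1 := by
  obtain ⟨x, hx⟩ : ∃ x, A.form j x ≠ 0 := by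
    by_contra! h
    exact A.form_ne_zero j (LinearMap.ext h)
  obtain ⟨y, hy⟩ : ∃ y, A.form j y < 0 := by
    rcases lt_or_gt_of_ne hx with h | h
    · exact ⟨x, h⟩
    · exact ⟨-x, by simpa using h⟩
  obtain ⟨C, hC⟩ := A.exists_chamber_of_point y
  exact ⟨C, by rw [hC j hy.ne, sgn_eq_neg_one_iff.2 hy.le]⟩

/-- The component maps of an admissible map at the elements of a circuit are one and the
same projection. -/
lemma IsCircuitRel.exists_dictator {c : ι → ℝ} (hc : A.IsCircuitRel c) {m : ℕ}
    {Φ : (Fin m → A.Ch) → A.Ch} {g : ι → (Fin m → ℤˣ) → ℤˣ}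
    (hpos : ∀ j, g j (fun _ => 1) = 1) (hneg : ∀ j, g j (fun _ => -1) = -1)
    (hg : ∀ j 𝒞, A.eps j 1 (Φ 𝒞) = g j (fun i => A.eps j 1 (𝒞 i))) :
    ∃ h, ∀ i, c i ≠ 0 → ∀ x, g i x = x h := by
  -- After twisting by the signs of `c`, the forbidden patterns are the constant ones.
  obtain ⟨h, hh⟩ := _root_.exists_dictator {i | c i ≠ 0} hc.ne_zero
    (fun i x => sgn (c i) * g i (fun p => sgn (c i) * x p))
    (fun i _ => by
      rcases Int.units_eq_one_or (sgn (c i)) with e | e <;> simp [e, hpos, hneg])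
    (fun i _ => by
      rcases Int.units_eq_one_or (sgn (c i)) with e | e <;> simp [e, hpos, hneg])
    hc.exists_third
    (fun X hX τ => by
      have hex : ∀ p, ∃ C : A.Ch, ∀ i, c i ≠ 0 → A.eps i 1 C = sgn (c i) * X i p := by
        intro p
        obtain ⟨i, hi, hi'⟩ := hX p 1
        obtain ⟨j, hj, hj'⟩ := hX p (-1)
        exact hc.exists_chamber _ ⟨i, hi, by rw [hi', mul_one]⟩
          ⟨j, hj, by rw [hj', mul_neg, mul_one]⟩
      choose 𝒞 h𝒞 using hex
      obtain ⟨i, hi, hne⟩ := hc.not_const (Φ 𝒞) τ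
      refine ⟨i, hi, ?_⟩
      rw [hg] at hne
      simpa only [h𝒞 _ i hi] using hne)
  refine ⟨h, fun i hi x => ?_⟩
  have := hh i hi (fun p => sgn (c i) * x p)
  simp only [← mul_assoc, Int.units_mul_self, one_mul] at this
  exact mul_left_cancel this

end Arrangement

/-- **Theorem.** If `𝒜` is a nonempty indecomposable real central arrangement with
`|𝒜| ≥ 3`, then every admissible map `Φ : Ch^m → Ch` is projective, i.e. the projection
onto the `h`-th component for some `h`. -/
theorem admissible_is_projective {ℓ : ℕ} {ι : Type} [Fintype ι] [Nonempty ι]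
    (A : Arrangement ℓ ι) (hA : A.Indecomposable) (hcard : 3 ≤ Fintype.card ι)
    (m : ℕ) (hm : 0 < m)
    (Φ : (Fin m → A.Ch) → A.Ch) (hΦ : A.IsAdmissible m Φ) :
    ∃ h : Fin m, Φ = fun 𝒞 => 𝒞 h := by
  obtain ⟨φ, hφ1, hφ⟩ := hΦ
  -- Unanimity of `φ j (-1)` at `1` is unanimity of `φ j 1` at `-1`.
  have hneg : ∀ j, φ j 1 (fun _ => -1) = -1 := by
    intro j
    obtain ⟨C, hC⟩ := Arrangement.exists_chamber_neg (A := A) j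
    have hflip : ∀ D : A.Ch, A.eps j (-1) D = -A.eps j 1 D := fun D => by
      simp only [Arrangement.eps, neg_mul, one_mul]
    have h1 := hφ j (-1) (fun _ => C)
    simp only [hflip, hC, neg_neg, hφ1] at h1
    have h2 := hφ j 1 (fun _ => C)
    simp only [hC] at h2
    rw [← h2]
    exact neg_eq_iff_eq_neg.1 h1
  have hcirc : ∀ c, A.IsCircuitRel c → ∃ h, ∀ i, c i ≠ 0 → ∀ x, φ i 1 x = x h :=
    fun c hc => hc.exists_dictator (fun j => hφ1 j 1) hneg (fun j => hφ j 1)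
  obtain ⟨j₀⟩ := ‹Nonempty ι›
  obtain ⟨h, hh⟩ : ∃ h, ∀ x, φ j₀ 1 x = x h := by
    obtain ⟨c, hc, ⟨i, hi, hci⟩, -⟩ := hA.exists_circuit {j₀} ⟨j₀, by simp⟩ (by
      rw [← Finset.card_pos, Finset.card_compl, Finset.card_singleton]
      omega)
    obtain ⟨h, hh⟩ := hcirc c hc
    rw [Finset.mem_singleton] at hi
    exact ⟨h, hh j₀ (hi ▸ hci)⟩
  -- A circuit leaving the set of hyperplanes with dictator `h` would have dictator `h` too.
  have hall : ∀ j x, φ j 1 x = x h := by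
    by_contra! hne
    obtain ⟨j₁, x₁, hj₁⟩ := hne
    obtain ⟨c, hc, ⟨i, hi, hci⟩, k, hk, hck⟩ := hA.exists_circuit
      (Finset.univ.filter fun j => ∀ x, φ j 1 x = x h) ⟨j₀, by simpa using hh⟩
      ⟨j₁, by simpa using ⟨x₁, hj₁⟩⟩
    obtain ⟨h', hh'⟩ := hcirc c hc
    have heq : h = h' := by
      by_contra hne
      have h1 := (Finset.mem_filter.1 hi).2 (fun p => if p = h then 1 else -1)
      rw [hh' i hci] at h1
      simp only [if_true, Ne.symm hne, if_false] at h1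
      exact absurd h1 (by decide)
    subst heq
    exact hk (by simpa using hh' k hck)
  refine ⟨h, funext fun 𝒞 => A.chamber_ext fun j => ?_⟩
  rw [hφ j 1, hall]
end
end

section
/- Decompose a nonempty real central arrangement 𝒜 into nonempty indecomposable arrangements as 𝒜 = 𝒜₁ ⊎ ⋯ ⊎ 𝒜_a ⊎ ℬ₁ ⊎ ⋯ ⊎ ℬ_b with |𝒜_p| = 1 for 1 ≤ p ≤ a and |ℬ_q| ≥ 3 for 1 ≤ q ≤ b. Then for each positive integer m, the number of admissible maps is |AM(𝒜, m)| = 2^{a(2^m − 2)} · m^b. -/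
/-!
A chamber is the same as a realizable sign vector, so an admissible map is the same as a family of
unanimous functions `f j : B^m → B` that sends `m` realizable sign vectors to a realizable one
(`CardAM.card_admissible`); `f j` is `φⱼ⁺`, and the condition on `φⱼ⁻` is unanimity of `f j` at the
all-minus vector. Because the rank is additive over the parts, signs on different parts can be
realized independently (`CardAM.exists_glue`), and the families may be counted part by part.

On a one-element part any unanimous function is allowed: `2^(2^m - 2)` choices. On an
indecomposable part with at least three elements the functions `f j` are all equal to one and the
same projection, giving `m` choices. Indeed, on a circuit with relation `∑ c j • αⱼ = 0` the
realizable sign vectors are all those other than `± sgn c`. Up to reorientation this is the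
not-all-equal relation on at least three coordinates, and an Arrow-type argument applies: the `f j`
coincide, are odd, and the sets of voters on which they output `+` form an ultrafilter on a finite
set, which is principal (`CardAM.exists_dictator_signed`). Indecomposability means that every
bipartition of the part is crossed by a circuit (`CardAM.exists_crossing_circuit`), so the dictator
is the same for the whole part (`CardAM.dictator_on_indecomposable`).
-/

noncomputable section
attribute [local instance] Classical.propDecidable

namespace CardAM

/-! ### Functions on sign vectors preserving a not-all-equal relation -/

/-- The sign vector with value `+` exactly on the set `S`. -/
def ind {m : ℕ} (S : Set (Fin m)) : Fin m → ℤˣ := fun i => if i ∈ S then 1 else -1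

lemma ind_one_set {m : ℕ} (w : Fin m → ℤˣ) : ind {i | w i = 1} = w := by
  funext i
  rcases Int.units_eq_one_or (w i) with h | h <;> simp [ind, h]

lemma ind_compl {m : ℕ} (S : Set (Fin m)) : ind Sᶜ = -ind S := by
  funext i
  by_cases h : i ∈ S <;> simp [ind, h]

lemma ne_neg_self (u : ℤˣ) : u ≠ -u := by
  rcases Int.units_eq_one_or u with h | h <;> rw [h] <;> decide

/-- An odd unanimous function `h` that never sends three sign vectors without a constant row to
the same sign is a projection: the sets whose indicator `h` sends to `+` form an ultrafilter,
and an ultrafilter on a finite set is principal. -/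
lemma exists_dictator_of_odd {m : ℕ} (h : (Fin m → ℤˣ) → ℤˣ)
    (h1 : h (fun _ => 1) = 1) (hodd : ∀ w, h (-w) = -h w)
    (hT : ∀ u v w : Fin m → ℤˣ, (∀ i, ¬ (u i = v i ∧ v i = w i)) → ¬ (h u = h v ∧ h v = h w)) :
    ∃ d, ∀ w, h w = w d := by
  have huniv : ind (Set.univ : Set (Fin m)) = fun _ => 1 := by funext i; simp [ind]
  have hcompl : ∀ S : Set (Fin m), h (ind Sᶜ) = -h (ind S) := fun S => by rw [ind_compl, hodd]
  have hmeet : ∀ S T : Set (Fin m), h (ind S) = 1 → h (ind T) = 1 → (S ∩ T).Nonempty := by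
    intro S T hS hT'
    by_contra hemp
    rw [Set.not_nonempty_iff_eq_empty] at hemp
    refine hT (ind S) (ind T) (fun _ => 1) (fun i hi => ?_) ⟨hS.trans hT'.symm, hT'.trans h1.symm⟩
    have hi' : ¬ (i ∈ S ∧ i ∈ T) := fun hST => by
      have : i ∈ S ∩ T := hST
      simp [hemp] at this
    clear hemp
    by_cases a : i ∈ S <;> by_cases b : i ∈ T <;> simp_all [ind]
  have hneg : ∀ S : Set (Fin m), h (ind S) ≠ 1 → h (ind Sᶜ) = 1 := by
    intro S hS
    rw [hcompl]
    rcases Int.units_eq_one_or (h (ind S)) with h | h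
    · exact absurd h hS
    · rw [h, neg_neg]
  let F : Filter (Fin m) :=
    { sets := {S | h (ind S) = 1}
      univ_sets := by simpa [huniv] using h1
      sets_of_superset := by
        intro S T hS hST
        by_contra hc
        obtain ⟨i, hi, hi'⟩ := hmeet S Tᶜ hS (hneg T hc)
        exact hi' (hST hi)
      inter_sets := by
        intro S T hS hT'
        by_contra hc
        have hD := hneg _ hc
        simp only [Set.mem_ofPred_eq] at hS hT'
        refine hT (ind S) (ind T) (ind (S ∩ T)ᶜ) (fun i hi => ?_)
          ⟨hS.trans hT'.symm, hT'.trans hD.symm⟩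
        by_cases a : i ∈ S <;> by_cases b : i ∈ T <;> simp_all [ind] }
  have hF : ∀ S : Set (Fin m), S ∈ F ↔ h (ind S) = 1 := fun S => Iff.rfl
  obtain ⟨d, hd⟩ := (Ultrafilter.ofComplNotMemIff F (fun S => by
    rw [hF, hF, hcompl]
    rcases Int.units_eq_one_or (h (ind S)) with h | h <;> rw [h] <;> decide)).eq_pure_of_finite
  have key : ∀ S : Set (Fin m), h (ind S) = 1 ↔ d ∈ S := by
    intro S
    rw [← hF, ← Ultrafilter.mem_pure, ← hd]
    rfl
  refine ⟨d, fun w => ?_⟩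
  have hw := key {i | w i = 1}
  rw [ind_one_set] at hw
  simp only [Set.mem_ofPred_eq] at hw
  rcases Int.units_eq_one_or (h w) with a | a <;> rcases Int.units_eq_one_or (w d) with b | b <;>
    simp_all

/-- Unanimous functions `g j` (`j ∈ C`, `|C| ≥ 3`) that map families of columns without constant
row to non-constant outcomes are all the same projection. -/
lemma exists_dictator_nae {ι : Type} (C : Finset ι) (hC : 3 ≤ C.card) {m : ℕ}
    (g : ι → (Fin m → ℤˣ) → ℤˣ) (hu : ∀ j c, g j (fun _ => c) = c)
    (H : ∀ v : ι → Fin m → ℤˣ, (∀ i, ∀ c, ∃ j ∈ C, v j i = c) → ∀ c, ∃ j ∈ C, g j (v j) = c) :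
    ∃ d, ∀ j ∈ C, ∀ w, g j w = w d := by
  have hthird : ∀ j l, ∃ p ∈ C, p ≠ j ∧ p ≠ l := by
    intro j l
    have : ({j, l} : Finset ι).card < C.card := (Finset.card_le_two).trans_lt (by omega)
    obtain ⟨p, hp, hp'⟩ := Finset.exists_mem_notMem_of_card_lt_card this
    simp only [Finset.mem_insert, Finset.mem_singleton, not_or] at hp'
    exact ⟨p, hp, hp'⟩
  have hflip : ∀ j ∈ C, ∀ l ∈ C, l ≠ j → ∀ w, g l (-w) = -g j w := by
    intro j hj l hl hlj w
    by_contra hc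
    have hc' : g l (-w) = g j w := by
      rcases Int.units_eq_one_or (g l (-w)) with a | a <;>
        rcases Int.units_eq_one_or (g j w) with b | b <;> simp_all
    obtain ⟨p, hp, hpp⟩ := H
      (fun p => if p = j then w else if p = l then -w else fun _ => g j w)
      (fun i c => by
        by_cases hwc : w i = c
        · exact ⟨j, hj, by simpa using hwc⟩
        · refine ⟨l, hl, ?_⟩
          rcases Int.units_eq_one_or (w i) with a | a <;>
            rcases Int.units_eq_one_or c with b | b <;> simp_all) (-g j w)
    apply ne_neg_self (g j w)
    rw [← hpp]
    by_cases h1 : p = j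
    · simp [h1]
    · by_cases h2 : p = l
      · simp [h2, hlj, hc']
      · simp [h1, h2, hu]
  obtain ⟨j₁, hj₁⟩ : C.Nonempty := Finset.card_pos.mp (by omega)
  obtain ⟨j₂, hj₂, h21, -⟩ := hthird j₁ j₁
  obtain ⟨j₃, hj₃, h31, h32⟩ := hthird j₁ j₂
  have heq : ∀ j ∈ C, g j = g j₁ := by
    intro j hj
    obtain ⟨l, hl, hlj, hl1⟩ := hthird j j₁
    funext w
    rw [← neg_inj, ← hflip j hj l hl hlj, hflip j₁ hj₁ l hl hl1]
  obtain ⟨d, hd⟩ := exists_dictator_of_odd (g j₁) (hu j₁ 1)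
    (fun w => by rw [← hflip j₁ hj₁ j₂ hj₂ h21 w, heq j₂ hj₂])
    (by
      rintro u v w hrow ⟨huv, hvw⟩
      obtain ⟨p, hp, hpp⟩ := H (fun p => if p = j₁ then u else if p = j₂ then v else w)
        (fun i c => by
          by_contra hcon
          push Not at hcon
          have e1 := hcon j₁ hj₁
          have e2 := hcon j₂ hj₂
          have e3 := hcon j₃ hj₃
          simp only [if_true, h21, h31, h32, if_false] at e1 e2 e3
          apply hrow i
          rcases Int.units_eq_one_or (u i) with a | a <;>
          rcases Int.units_eq_one_or (v i) with a₂ | a₂ <;>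
          rcases Int.units_eq_one_or (w i) with a₃ | a₃ <;>
          rcases Int.units_eq_one_or c with b | b <;> simp_all) (-g j₁ w)
      apply ne_neg_self (g j₁ w)
      rw [← hpp, heq p hp]
      by_cases h1 : p = j₁
      · simp [h1, huv, hvw]
      · by_cases h2 : p = j₂
        · simp [h2, h21, hvw]
        · simp [h1, h2])
  exact ⟨d, fun j hj w => by rw [heq j hj, hd]⟩

/-- The same for the relation of being neither `s` nor `-s` on `C`, reduced to the case `s = +` by
reorienting. -/
lemma exists_dictator_signed {ι : Type} (C : Finset ι) (hC : 3 ≤ C.card) {m : ℕ} (s : ι → ℤˣ)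
    (f : ι → (Fin m → ℤˣ) → ℤˣ) (hu : ∀ j c, f j (fun _ => c) = c)
    (H : ∀ v : Fin m → ι → ℤˣ, (∀ i, ∀ c, ∃ j ∈ C, v i j = c * s j) →
      ∀ c, ∃ j ∈ C, f j (fun i => v i j) = c * s j) :
    ∃ d, ∀ j ∈ C, ∀ w, f j w = w d := by
  have hss : ∀ j, s j * s j = 1 := fun j => Int.units_mul_self _
  obtain ⟨d, hd⟩ := exists_dictator_nae C hC (fun j w => s j * f j (fun i => s j * w i))
    (fun j c => by simp only [hu]; rw [← mul_assoc, hss, one_mul])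
    (fun v hv c => by
      obtain ⟨j, hj, h⟩ := H (fun i j => s j * v j i) (fun i c => by
        obtain ⟨j, hj, h⟩ := hv i c
        exact ⟨j, hj, by rw [h, mul_comm]⟩) c
      exact ⟨j, hj, by rw [h, mul_left_comm, hss, mul_one]⟩)
  refine ⟨d, fun j hj w => ?_⟩
  have := hd j hj (fun i => s j * w i)
  simp only [← mul_assoc, hss, one_mul] at this
  exact mul_left_cancel this

/-! ### Chambers and realizable sign vectors -/

variable {ℓ : ℕ} {ι : Type} [Fintype ι]

/-- The sign vector `s` is realizable if it is the sign vector of a point of the complement. -/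
def Realizable (A : Arrangement ℓ ι) (s : ι → ℤˣ) : Prop :=
  ∃ x, ∀ j, 0 < ((s j : ℤ) : ℝ) * A.form j x

/-- The sign of a real number, with the convention that the sign of `0` is `-`. -/
def sg (t : ℝ) : ℤˣ := if 0 < t then 1 else -1

lemma sg_mul_pos {t : ℝ} (ht : t ≠ 0) : 0 < ((sg t : ℤ) : ℝ) * t := by
  unfold sg
  split_ifs with h
  · simpa using h
  · have : t < 0 := lt_of_le_of_ne (not_lt.mp h) ht
    simpa using this

lemma eq_of_mul_pos {u v : ℤˣ} {t t' : ℝ} (hu : 0 < ((u : ℤ) : ℝ) * t)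
    (hv : 0 < ((v : ℤ) : ℝ) * t') (htt : 0 < t * t') : u = v := by
  rcases Int.units_eq_one_or u with rfl | rfl <;> rcases Int.units_eq_one_or v with rfl | rfl <;>
    first
    | rfl
    | (simp only [Units.val_one, Units.val_neg, Int.cast_one, Int.cast_neg, one_mul, neg_mul]
        at hu hv
       nlinarith)

lemma exists_mem_complement (A : Arrangement ℓ ι) : ∃ y, ∀ j, A.form j y ≠ 0 := by
  apply Module.Dual.exists_forall_ne_zero_of_forall_exists
  intro j
  by_contra h
  push Not at h
  exact A.form_ne_zero j (LinearMap.ext h)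

/-- A point whose forms are nonzero on `C` can be moved into the complement without changing
its signs on `C`. -/
lemma exists_realizable_of_partial (A : Arrangement ℓ ι) (C : Finset ι) (s : ι → ℤˣ)
    (x : Fin ℓ → ℝ) (hx : ∀ j ∈ C, 0 < ((s j : ℤ) : ℝ) * A.form j x) :
    ∃ s', Realizable A s' ∧ ∀ j ∈ C, s' j = s j := by
  obtain ⟨y, hy⟩ := exists_mem_complement A
  have hev : ∀ j, ∀ᶠ δ in nhdsWithin (0 : ℝ) (Set.Ioi 0),
      (A.form j (x + δ • y) ≠ 0) ∧
        (A.form j x ≠ 0 → 0 < A.form j x * A.form j (x + δ • y)) := by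
    intro j
    by_cases h0 : A.form j x = 0
    · filter_upwards [self_mem_nhdsWithin] with δ hδ
      have hδ' : δ ≠ 0 := ne_of_gt hδ
      simp [h0, hy j, hδ']
    · have hcont : Continuous fun δ : ℝ => A.form j x * A.form j (x + δ • y) := by
        simp only [map_add, map_smul, smul_eq_mul]
        fun_prop
      have hpos : 0 < A.form j x * A.form j (x + (0 : ℝ) • y) := by
        simpa using mul_self_pos.mpr h0
      filter_upwards [nhdsWithin_le_nhds (hcont.continuousAt.eventually (lt_mem_nhds hpos))]
        with δ hδ
      exact ⟨fun h => by simp [h] at hδ, fun _ => hδ⟩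
  obtain ⟨δ, hδ⟩ := (Filter.eventually_all.mpr hev).exists
  refine ⟨fun j => sg (A.form j (x + δ • y)), ⟨x + δ • y, fun j => sg_mul_pos (hδ j).1⟩, ?_⟩
  intro j hj
  refine eq_of_mul_pos (sg_mul_pos (hδ j).1) (hx j hj) ?_
  rw [mul_comm]
  refine (hδ j).2 (fun h => ?_)
  have := hx j hj
  simp [h] at this

/-- Every single hyperplane has realizable sign vectors on both sides. -/
lemma exists_realizable_apply_eq (A : Arrangement ℓ ι) (j : ι) (c : ℤˣ) :
    ∃ s, Realizable A s ∧ s j = c := by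
  obtain ⟨y, hy⟩ := exists_mem_complement A
  have h1 : Realizable A (fun k => sg (A.form k y)) := ⟨y, fun k => sg_mul_pos (hy k)⟩
  by_cases hc : sg (A.form j y) = c
  · exact ⟨_, h1, hc⟩
  · refine ⟨fun k => -sg (A.form k y), ⟨-y, fun k => ?_⟩, ?_⟩
    · simpa using sg_mul_pos (hy k)
    · rcases Int.units_eq_one_or (sg (A.form j y)) with a | a <;>
        rcases Int.units_eq_one_or c with b | b <;> simp_all

lemma eps_eq_mul (A : Arrangement ℓ ι) (j : ι) (σ : ℤˣ) (C : A.Ch) :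
    A.eps j σ C = σ * A.eps j 1 C := by
  simp [Arrangement.eps]

lemma chamber_subset (A : Arrangement ℓ ι) (C : A.Ch) {x} (hx : x ∈ C.1) (j : ι) :
    A.form j x ≠ 0 := by
  obtain ⟨C, x₀, hx₀, rfl⟩ := C
  exact connectedComponentIn_subset _ _ hx j

lemma chamber_nonempty (A : Arrangement ℓ ι) (C : A.Ch) : C.1.Nonempty := by
  obtain ⟨C, x₀, hx₀, rfl⟩ := C
  exact ⟨x₀, mem_connectedComponentIn hx₀⟩

/-- `εⱼ⁺(C)` is the sign of `αⱼ` at every point of `C`, as `C` is connected and `αⱼ` has no zero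
on it. -/
lemma eps_mul_pos (A : Arrangement ℓ ι) (j : ι) (C : A.Ch) {x} (hx : x ∈ C.1) :
    0 < ((A.eps j 1 C : ℤ) : ℝ) * A.form j x := by
  unfold Arrangement.eps
  split_ifs with h
  · simpa using h x hx
  · push Not at h
    obtain ⟨y, hy, hy0⟩ := h
    suffices A.form j x < 0 by simpa using this
    by_contra hxn
    have hpre : IsPreconnected C.1 := by
      obtain ⟨C, x₀, hx₀, rfl⟩ := C
      exact isPreconnected_connectedComponentIn
    have hcont : ContinuousOn (fun z => A.form j z) C.1 :=
      (LinearMap.continuous_of_finiteDimensional (A.form j)).continuousOn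
    obtain ⟨z, hz, hz0⟩ := hpre.intermediate_value hy hx hcont ⟨hy0, not_lt.mp hxn⟩
    exact chamber_subset A C hz j hz0

lemma realizable_eps (A : Arrangement ℓ ι) (C : A.Ch) :
    Realizable A (fun j => A.eps j 1 C) := by
  obtain ⟨x, hx⟩ := chamber_nonempty A C
  exact ⟨x, fun j => eps_mul_pos A j C hx⟩

/-- A chamber is determined by its signs, because the points with given signs form a convex
subset of the complement. -/
lemma chamber_ext (A : Arrangement ℓ ι) (C D : A.Ch) (h : ∀ j, A.eps j 1 C = A.eps j 1 D) :
    C = D := by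
  obtain ⟨x, hx⟩ := chamber_nonempty A C
  obtain ⟨y, hy⟩ := chamber_nonempty A D
  have hconv : Convex ℝ {z | ∀ j, 0 < ((A.eps j 1 C : ℤ) : ℝ) * A.form j z} := by
    intro u hu v hv p q hp hq hpq j
    have h1 := hu j
    have h2 := hv j
    simp only [map_add, map_smul, smul_eq_mul]
    rcases hp.eq_or_lt with rfl | hp
    · rw [zero_add] at hpq
      simpa [hpq] using h2
    · have := mul_pos hp h1
      have := mul_nonneg hq h2.le
      nlinarith
  have hsub : {z | ∀ j, 0 < ((A.eps j 1 C : ℤ) : ℝ) * A.form j z} ⊆ A.Complement := by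
    intro z hz j h0
    have := hz j
    simp [h0] at this
  have hx' : x ∈ {z | ∀ j, 0 < ((A.eps j 1 C : ℤ) : ℝ) * A.form j z} :=
    fun j => eps_mul_pos A j C hx
  have hy' : y ∈ {z | ∀ j, 0 < ((A.eps j 1 C : ℤ) : ℝ) * A.form j z} :=
    fun j => by rw [h j]; exact eps_mul_pos A j D hy
  have hxy := hconv.isPreconnected.subset_connectedComponentIn hx' hsub hy'
  obtain ⟨C, x₀, hx₀, rfl⟩ := C
  obtain ⟨D, y₀, hy₀, rfl⟩ := D
  apply Subtype.ext
  change connectedComponentIn _ _ = connectedComponentIn _ _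
  rw [connectedComponentIn_eq hx, connectedComponentIn_eq hy, connectedComponentIn_eq hxy]

lemma exists_chamber (A : Arrangement ℓ ι) (s : ι → ℤˣ) (hs : Realizable A s) :
    ∃ C : A.Ch, ∀ j, A.eps j 1 C = s j := by
  obtain ⟨x, hx⟩ := hs
  have hxc : x ∈ A.Complement := fun j h0 => by
    have := hx j
    simp [h0] at this
  let C : A.Ch := ⟨connectedComponentIn A.Complement x, x, hxc, rfl⟩
  exact ⟨C, fun j => eq_of_mul_pos (eps_mul_pos A j C (mem_connectedComponentIn hxc)) (hx j)
    (mul_self_pos.mpr (hxc j))⟩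

/-! ### Circuits -/

lemma rnkOn_eq_finrank_span (A : Arrangement ℓ ι) (S : Finset ι) :
    A.rnkOn S = Module.finrank ℝ (Submodule.span ℝ (A.form '' (S : Set ι))) := by
  have h := Subspace.finrank_add_finrank_dualCoannihilator_eq
    (Submodule.span ℝ (A.form '' (S : Set ι)) : Subspace ℝ (Module.Dual ℝ (Fin ℓ → ℝ)))
  have hker : (Submodule.span ℝ (A.form '' (S : Set ι)) :
      Submodule ℝ (Module.Dual ℝ (Fin ℓ → ℝ))).dualCoannihilator
        = ⨅ j ∈ S, LinearMap.ker (A.form j) := by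
    apply SetLike.ext'
    rw [Submodule.coe_dualCoannihilator_span]
    ext x
    simp
  rw [hker, Module.finrank_fin_fun] at h
  exact (Nat.eq_sub_of_add_eq h).symm

lemma finrank_span_of_linearIndepOn (A : Arrangement ℓ ι) (S : Finset ι)
    (h : LinearIndepOn ℝ A.form (S : Set ι)) :
    Module.finrank ℝ (Submodule.span ℝ (A.form '' (S : Set ι))) = S.card := by
  have := finrank_span_eq_card h
  rw [← Set.image_eq_range] at this
  rw [this]
  simp

lemma exists_basis_subset (A : Arrangement ℓ ι) (S : Finset ι) :
    ∃ T ⊆ S, LinearIndepOn ℝ A.form (T : Set ι) ∧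
      Submodule.span ℝ (A.form '' (T : Set ι)) = Submodule.span ℝ (A.form '' (S : Set ι)) := by
  have h0 : LinearIndepOn ℝ A.form (∅ : Set ι) := linearIndepOn_empty ℝ A.form
  have hsub : (∅ : Set ι) ⊆ (S : Set ι) := Set.empty_subset _
  refine ⟨(h0.extend hsub).toFinset, ?_, ?_, ?_⟩
  · intro j hj
    exact h0.extend_subset hsub (by simpa using hj)
  · simpa using h0.linearIndepOn_extend hsub
  · simpa using h0.span_image_extend_eq_span_image hsub

/-- A circuit `C` with its relation `c`: `∑ j ∈ C, c j • αⱼ = 0` with all coefficients nonzero,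
while the forms indexed by `C` minus any one element are independent. -/
def IsCircuitRel (A : Arrangement ℓ ι) (C : Finset ι) (c : ι → ℝ) : Prop :=
  C.Nonempty ∧ (∀ j ∈ C, c j ≠ 0) ∧ ∑ j ∈ C, c j • A.form j = 0 ∧
    ∀ l ∈ C, LinearIndepOn ℝ A.form (C.erase l : Set ι)

lemma exists_circuit_subset (A : Arrangement ℓ ι) (S : Finset ι)
    (h : ¬ LinearIndepOn ℝ A.form (S : Set ι)) :
    ∃ C ⊆ S, ∃ c, IsCircuitRel A C c := by
  obtain ⟨C, hCS, hmin⟩ := exists_minimal_le_of_wellFoundedLT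
    (fun C : Finset ι => ¬ LinearIndepOn ℝ A.form (C : Set ι)) S h
  have hind : ∀ l ∈ C, LinearIndepOn ℝ A.form (C.erase l : Set ι) := by
    intro l hl
    by_contra hc
    have := hmin.2 hc (Finset.erase_subset l C)
    exact Finset.notMem_erase l C (this hl)
  have hdep : ¬ LinearIndepOn ℝ A.form (C : Set ι) := hmin.1
  rw [linearIndepOn_finset_iff] at hdep
  push Not at hdep
  obtain ⟨c, hc, l, hl, hcl⟩ := hdep
  refine ⟨C, hCS, c, ⟨l, hl⟩, fun j hj hj0 => ?_, hc, hind⟩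
  have h1 := hind j hj
  rw [linearIndepOn_finset_iff] at h1
  refine hcl (h1 c ?_ l ?_)
  · rw [← hc, ← Finset.add_sum_erase C _ hj, hj0, zero_smul, zero_add]
  · refine Finset.mem_erase.mpr ⟨?_, hl⟩
    rintro rfl
    exact hcl hj0

/-- In an indecomposable subarrangement every nontrivial bipartition is crossed by a circuit:
otherwise the union of bases of the two parts would be independent, and the rank additive. -/
lemma exists_crossing_circuit (A : Arrangement ℓ ι) (S S₁ S₂ : Finset ι)
    (hind : A.IndecomposableOn S) (h₁ : S₁.Nonempty) (h₂ : S₂.Nonempty)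
    (hd : Disjoint S₁ S₂) (hS : S₁ ∪ S₂ = S) :
    ∃ C ⊆ S, ∃ c, IsCircuitRel A C c ∧ (∃ j ∈ C, j ∈ S₁) ∧ (∃ j ∈ C, j ∈ S₂) := by
  obtain ⟨B₁, hB₁, hi₁, hs₁⟩ := exists_basis_subset A S₁
  obtain ⟨B₂, hB₂, hi₂, hs₂⟩ := exists_basis_subset A S₂
  have hdep : ¬ LinearIndepOn ℝ A.form ((B₁ ∪ B₂ : Finset ι) : Set ι) := by
    intro hi
    refine hind ⟨S₁, S₂, h₁, h₂, hd, hS, ?_⟩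
    have hcard := finrank_span_of_linearIndepOn A _ hi
    rw [Finset.card_union_of_disjoint (Finset.disjoint_of_subset_left hB₁
      (Finset.disjoint_of_subset_right hB₂ hd))] at hcard
    rw [rnkOn_eq_finrank_span, rnkOn_eq_finrank_span, rnkOn_eq_finrank_span, ← hs₁, ← hs₂,
      finrank_span_of_linearIndepOn A _ hi₁, finrank_span_of_linearIndepOn A _ hi₂, ← hcard,
      ← hS, Finset.coe_union, Finset.coe_union, Set.image_union, Set.image_union,
      Submodule.span_union, Submodule.span_union, hs₁, hs₂]
  obtain ⟨C, hC, c, hcirc⟩ := exists_circuit_subset A _ hdep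
  have hCdep : ¬ LinearIndepOn ℝ A.form (C : Set ι) := by
    intro h
    rw [linearIndepOn_finset_iff] at h
    obtain ⟨j, hj⟩ := hcirc.1
    exact hcirc.2.1 j hj (h c hcirc.2.2.1 j hj)
  have hside : ∀ j ∈ C, j ∈ B₁ ∨ j ∈ B₂ := fun j hj => Finset.mem_union.mp (hC hj)
  refine ⟨C, ?_, c, hcirc, ?_, ?_⟩
  · rw [← hS]
    exact hC.trans (Finset.union_subset_union hB₁ hB₂)
  · by_contra hc
    push Not at hc
    refine hCdep (hi₂.mono fun j hj => ?_)
    exact (hside j hj).resolve_left fun h => hc j hj (hB₁ h)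
  · by_contra hc
    push Not at hc
    refine hCdep (hi₁.mono fun j hj => ?_)
    exact (hside j hj).resolve_right fun h => hc j hj (hB₂ h)

/-- A circuit with two distinct elements has at least three, as the hyperplanes are distinct. -/
lemma three_le_card_circuit (A : Arrangement ℓ ι) (C : Finset ι) (c : ι → ℝ)
    (hC : IsCircuitRel A C c) {j l : ι} (hj : j ∈ C) (hl : l ∈ C) (hjl : j ≠ l) :
    3 ≤ C.card := by
  by_contra hcard
  have hsub : ({j, l} : Finset ι) ⊆ C := by
    intro p hp
    rcases Finset.mem_insert.mp hp with rfl | hp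
    · exact hj
    · rwa [Finset.mem_singleton.mp hp]
  have hCeq : ({j, l} : Finset ι) = C :=
    Finset.eq_of_subset_of_card_le hsub (by rw [Finset.card_pair hjl]; omega)
  have hrel := hC.2.2.1
  rw [← hCeq, Finset.sum_pair hjl] at hrel
  have hcj := hC.2.1 j hj
  have hcl := hC.2.1 l hl
  refine hjl (A.ker_injective j l ?_)
  ext x
  have hx : c j * A.form j x + c l * A.form l x = 0 := by
    simpa using congrArg (fun f => f x) hrel
  rw [LinearMap.mem_ker, LinearMap.mem_ker]
  constructor <;> intro h0 <;> simpa [h0, hcj, hcl] using hx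

/-- Independent linear forms take arbitrary prescribed values at a common point. -/
lemma exists_form_eq (A : Arrangement ℓ ι) (D : Finset ι)
    (h : LinearIndepOn ℝ A.form (D : Set ι)) (t : ι → ℝ) :
    ∃ x, ∀ j ∈ D, A.form j x = t j := by
  have h' : LinearIndependent ℝ (fun j : (D : Set ι) => A.form j) := h
  obtain ⟨Ψ, hΨ⟩ := LinearMap.exists_extend
    ((Module.Basis.span h').constr ℝ (fun j : (D : Set ι) => t j))
  refine ⟨(Module.evalEquiv ℝ (Fin ℓ → ℝ)).symm Ψ, fun j hj => ?_⟩
  have h1 : A.form j ((Module.evalEquiv ℝ (Fin ℓ → ℝ)).symm Ψ) = Ψ (A.form j) :=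
    Module.apply_evalEquiv_symm_apply ℝ (Fin ℓ → ℝ) (A.form j) Ψ
  rw [h1]
  have h2 := LinearMap.congr_fun hΨ (Module.Basis.span h' ⟨j, hj⟩)
  rw [Module.Basis.constr_basis] at h2
  rw [LinearMap.comp_apply, Submodule.subtype_apply, Module.Basis.span_apply] at h2
  exact h2

/-- Sign vectors on a circuit other than `± sgn c` are realizable. -/
lemma exists_realizable_circuit (A : Arrangement ℓ ι) (C : Finset ι) (c : ι → ℝ)
    (hC : IsCircuitRel A C c) (s : ι → ℤˣ) (hs : ∀ u, ∃ j ∈ C, s j = u * sg (c j)) :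
    ∃ s', Realizable A s' ∧ ∀ j ∈ C, s' j = s j := by
  have hss : ∀ u : ℤˣ, ((u : ℤ) : ℝ) * ((u : ℤ) : ℝ) = 1 := by
    intro u
    rcases Int.units_eq_one_or u with rfl | rfl <;> simp
  -- values with the prescribed signs that satisfy the relation: start from `s` itself and enlarge
  -- one coordinate whose contribution has the sign opposite to the defect `T`
  obtain ⟨t, ht, htsum⟩ : ∃ t : ι → ℝ, (∀ j ∈ C, 0 < ((s j : ℤ) : ℝ) * t j) ∧
      ∑ j ∈ C, c j * t j = 0 := by
    set T : ℝ := ∑ j ∈ C, c j * ((s j : ℤ) : ℝ) with hT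
    obtain ⟨l, hl, hlT⟩ : ∃ l ∈ C, 0 ≤ -T * (c l * ((s l : ℤ) : ℝ)) := by
      obtain ⟨j, hj, hjs⟩ := hs 1
      obtain ⟨k, hk, hks⟩ := hs (-1)
      have hj' := sg_mul_pos (hC.2.1 j hj)
      have hk' := sg_mul_pos (hC.2.1 k hk)
      rcases le_total T 0 with h | h
      · refine ⟨j, hj, ?_⟩
        rw [hjs, one_mul]
        nlinarith
      · refine ⟨k, hk, ?_⟩
        rw [hks]
        simp only [neg_mul, one_mul, Units.val_neg, Int.cast_neg]
        nlinarith
    have hcl := hC.2.1 l hl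
    refine ⟨fun j => ((s j : ℤ) : ℝ) + if j = l then -T / c l else 0, fun j hj => ?_, ?_⟩
    · by_cases h : j = l
      · subst h
        have h1 : ((s j : ℤ) : ℝ) * (-T / c j) = (-T * (c j * ((s j : ℤ) : ℝ))) / (c j) ^ 2 := by
          field_simp
        have h2 : 0 ≤ (-T * (c j * ((s j : ℤ) : ℝ))) / (c j) ^ 2 := by positivity
        simp only [if_true]
        rw [mul_add, hss, h1]
        linarith
      · simp [h, hss]
    · simp only [mul_add, Finset.sum_add_distrib, mul_ite, mul_zero, Finset.sum_ite_eq', hl,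
        if_true]
      rw [← hT]
      field_simp
      ring
  obtain ⟨l, hl⟩ := hC.1
  obtain ⟨x, hx⟩ := exists_form_eq A (C.erase l) (hC.2.2.2 l hl) t
  have hrel : ∑ j ∈ C, c j * A.form j x = 0 := by
    simpa using congrArg (fun f => f x) hC.2.2.1
  have hxl : A.form l x = t l := by
    rw [← Finset.add_sum_erase C _ hl] at hrel htsum
    have : ∑ j ∈ C.erase l, c j * A.form j x = ∑ j ∈ C.erase l, c j * t j :=
      Finset.sum_congr rfl fun j hj => by rw [hx j hj]
    have h3 : c l * A.form l x = c l * t l := by linarith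
    exact mul_left_cancel₀ (hC.2.1 l hl) h3
  refine exists_realizable_of_partial A C s x fun j hj => ?_
  by_cases h : j = l
  · subst h
    rw [hxl]
    exact ht j hj
  · rw [hx j (Finset.mem_erase.mpr ⟨h, hj⟩)]
    exact ht j hj

/-- A realizable sign vector is neither `sgn c` nor `-sgn c` on a circuit. -/
lemma realizable_circuit (A : Arrangement ℓ ι) (C : Finset ι) (c : ι → ℝ)
    (hC : IsCircuitRel A C c) (s : ι → ℤˣ) (hs : Realizable A s) (u : ℤˣ) :
    ∃ j ∈ C, s j = u * sg (c j) := by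
  by_contra hcon
  push Not at hcon
  obtain ⟨x, hx⟩ := hs
  have hrel : ∑ j ∈ C, c j * A.form j x = 0 := by
    simpa using congrArg (fun f => f x) hC.2.2.1
  have hpos : 0 < ∑ j ∈ C, -((u : ℤ) : ℝ) * (c j * A.form j x) := by
    refine Finset.sum_pos (fun j hj => ?_) hC.1
    have h1 := sg_mul_pos (hC.2.1 j hj)
    have h2 := hx j
    have h3 := hcon j hj
    rcases Int.units_eq_one_or u with a | a <;>
      rcases Int.units_eq_one_or (s j) with a₂ | a₂ <;>
      rcases Int.units_eq_one_or (sg (c j)) with a₃ | a₃ <;>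
      simp only [a, a₂, a₃, one_mul, mul_one, neg_neg, neg_mul, mul_neg, Units.val_one,
        Units.val_neg, Int.cast_one, Int.cast_neg, ne_eq, not_true_eq_false] at h1 h2 h3 ⊢ <;>
      nlinarith
  rw [← Finset.mul_sum, hrel, mul_zero] at hpos
  exact lt_irrefl _ hpos

/-! ### Families of functions preserving realizability -/

/-- Families `f j : B^m → B` of unanimous functions that, applied hyperplane by hyperplane, send
`m` realizable sign vectors to a realizable one. These are the families `φⱼ⁺` of admissible
maps. -/
def IsFam (A : Arrangement ℓ ι) (m : ℕ) (f : ι → (Fin m → ℤˣ) → ℤˣ) : Prop :=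
  (∀ j c, f j (fun _ => c) = c) ∧
    ∀ v : Fin m → ι → ℤˣ, (∀ i, Realizable A (v i)) → Realizable A (fun j => f j (fun i => v i j))

lemma dictator_on_circuit (A : Arrangement ℓ ι) {m : ℕ} (f : ι → (Fin m → ℤˣ) → ℤˣ)
    (hf : IsFam A m f) (C : Finset ι) (c : ι → ℝ) (hC : IsCircuitRel A C c) (h3 : 3 ≤ C.card) :
    ∃ d, ∀ j ∈ C, ∀ w, f j w = w d := by
  refine exists_dictator_signed C h3 (fun j => sg (c j)) f hf.1 fun v hv u => ?_
  choose v' hv' hvv using fun i => exists_realizable_circuit A C c hC (v i) (hv i)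
  obtain ⟨j, hj, h⟩ := realizable_circuit A C c hC _ (hf.2 v' hv') u
  refine ⟨j, hj, ?_⟩
  rw [← h]
  congr 1
  funext i
  exact (hvv i j hj).symm

/-- Dictators spread over an indecomposable part, because circuits cross every bipartition. -/
lemma dictator_on_indecomposable (A : Arrangement ℓ ι) {m : ℕ} (f : ι → (Fin m → ℤˣ) → ℤˣ)
    (hf : IsFam A m f) (S : Finset ι) (hS : A.IndecomposableOn S) (h2 : 2 ≤ S.card) :
    ∃ d, ∀ j ∈ S, ∀ w, f j w = w d := by
  have cross : ∀ S₁ : Finset ι, S₁ ⊆ S → S₁.Nonempty → (S \ S₁).Nonempty →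
      ∃ d, (∃ j ∈ S₁, ∀ w, f j w = w d) ∧ (∃ j ∈ S \ S₁, ∀ w, f j w = w d) := by
    intro S₁ hsub hne hne'
    obtain ⟨C, hCS, c, hC, ⟨j, hj, hj₁⟩, ⟨l, hl, hl₂⟩⟩ := exists_crossing_circuit A S S₁ (S \ S₁)
      hS hne hne' Finset.disjoint_sdiff (Finset.union_sdiff_of_subset hsub)
    have hjl : j ≠ l := by
      rintro rfl
      exact (Finset.mem_sdiff.mp hl₂).2 hj₁
    obtain ⟨d, hd⟩ := dictator_on_circuit A f hf C c hC (three_le_card_circuit A C c hC hj hl hjl)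
    exact ⟨d, ⟨j, hj₁, hd j hj⟩, ⟨l, hl₂, hd l hl⟩⟩
  have hdict : ∀ j ∈ S, ∃ d, ∀ w, f j w = w d := by
    intro j hj
    obtain ⟨d, ⟨k, hk, hkd⟩, -⟩ := cross {j} (by simpa using hj) (Finset.singleton_nonempty j) (by
      obtain ⟨l, hl, hl'⟩ := Finset.exists_mem_notMem_of_card_lt_card
        (s := {j}) (t := S) (by rw [Finset.card_singleton]; omega)
      exact ⟨l, Finset.mem_sdiff.mpr ⟨hl, hl'⟩⟩)
    rw [Finset.mem_singleton.mp hk] at hkd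
    exact ⟨d, hkd⟩
  obtain ⟨j₀, hj₀⟩ : S.Nonempty := Finset.card_pos.mp (by omega)
  obtain ⟨d₀, hd₀⟩ := hdict j₀ hj₀
  refine ⟨d₀, ?_⟩
  by_contra hcon
  push Not at hcon
  obtain ⟨l, hl, w, hw⟩ := hcon
  obtain ⟨d, ⟨j, hj, hjd⟩, ⟨k, hk, hkd⟩⟩ := cross (S.filter fun j => ∀ w, f j w = w d₀)
    (Finset.filter_subset _ _) ⟨j₀, Finset.mem_filter.mpr ⟨hj₀, hd₀⟩⟩
    ⟨l, Finset.mem_sdiff.mpr ⟨hl, fun h => hw ((Finset.mem_filter.mp h).2 w)⟩⟩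
  have hk' := Finset.mem_sdiff.mp hk
  refine hk'.2 (Finset.mem_filter.mpr ⟨hk'.1, fun w => ?_⟩)
  rw [hkd, ← hjd w, (Finset.mem_filter.mp hj).2]

/-- If the rank is additive over the parts, then points chosen independently for the parts can be
merged: `V → ∏ V ⧸ Kᵢ`, with `Kᵢ` the intersection of the hyperplanes of the `i`-th part, is
surjective by counting dimensions. -/
lemma exists_glue (A : Arrangement ℓ ι) {κ : Type} [Fintype κ] (P : κ → Finset ι)
    (hcover : ∀ j : ι, ∃ i, j ∈ P i) (hrnk : A.rnk = ∑ i, A.rnkOn (P i))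
    (y : κ → Fin ℓ → ℝ) : ∃ x, ∀ i, ∀ j ∈ P i, A.form j x = A.form j (y i) := by
  let K : κ → Submodule ℝ (Fin ℓ → ℝ) := fun i => ⨅ j ∈ P i, LinearMap.ker (A.form j)
  let L : (Fin ℓ → ℝ) →ₗ[ℝ] (∀ i, (Fin ℓ → ℝ) ⧸ K i) := LinearMap.pi fun i => (K i).mkQ
  have hker : LinearMap.ker L = ⨅ j ∈ (Finset.univ : Finset ι), LinearMap.ker (A.form j) := by
    ext x
    simp only [L, K, LinearMap.ker_pi, Submodule.ker_mkQ, Submodule.mem_iInf, Finset.mem_univ,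
      true_imp_iff]
    constructor
    · intro h j
      obtain ⟨i, hi⟩ := hcover j
      exact h i j hi
    · intro h i j _
      exact h j
  have hsurj : LinearMap.range L = ⊤ := by
    apply Submodule.eq_top_of_finrank_eq
    have h1 := LinearMap.finrank_range_add_finrank_ker L
    rw [hker, Module.finrank_fin_fun] at h1
    have h2 : ∀ i, Module.finrank ℝ ((Fin ℓ → ℝ) ⧸ K i) = A.rnkOn (P i) := by
      intro i
      have := (K i).finrank_quotient_add_finrank
      rw [Module.finrank_fin_fun] at this
      exact Nat.eq_sub_of_add_eq this
    rw [Module.finrank_pi_fintype, Finset.sum_congr rfl fun i _ => h2 i, ← hrnk]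
    exact Nat.eq_sub_of_add_eq h1
  obtain ⟨x, hx⟩ := LinearMap.range_eq_top.mp hsurj (fun i => (K i).mkQ (y i))
  refine ⟨x, fun i j hj => ?_⟩
  have h1 : (K i).mkQ x = (K i).mkQ (y i) := congrFun hx i
  rw [Submodule.mkQ_apply, Submodule.mkQ_apply, Submodule.Quotient.eq] at h1
  simp only [K, Submodule.mem_iInf, LinearMap.mem_ker, map_sub] at h1
  exact sub_eq_zero.mp (h1 j hj)

/-! ### Counting -/

/-- Unanimous functions `B^m → B`. -/
abbrev Unan (m : ℕ) : Type := {g : (Fin m → ℤˣ) → ℤˣ // ∀ c, g (fun _ => c) = c}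

/-- A unanimous function is free away from the two constant vectors. -/
def unanEquiv {m : ℕ} (hm : 0 < m) :
    Unan m ≃ ({v : Fin m → ℤˣ // ¬ (v = (fun _ => 1) ∨ v = fun _ => -1)} → ℤˣ) where
  toFun g v := g.1 v.1
  invFun k := ⟨fun v => if h : v = (fun _ => 1) ∨ v = (fun _ => -1) then v ⟨0, hm⟩ else k ⟨v, h⟩,
    fun c => by rcases Int.units_eq_one_or c with rfl | rfl <;> simp⟩
  left_inv g := by
    apply Subtype.ext
    funext v
    by_cases h : v = (fun _ => 1) ∨ v = (fun _ => -1)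
    · simp only [h, dif_pos]
      rcases h with rfl | rfl <;> rw [g.2]
    · simp only [h, dif_neg, not_false_eq_true]
  right_inv k := by
    funext v
    simp only [v.2, dif_neg, not_false_eq_true]

lemma card_unan {m : ℕ} (hm : 0 < m) : Nat.card (Unan m) = 2 ^ (2 ^ m - 2) := by
  have hne : (fun _ : Fin m => (1 : ℤˣ)) ≠ fun _ => -1 := fun h => by
    have := congrFun h ⟨0, hm⟩
    revert this
    decide
  have hU : Fintype.card ℤˣ = 2 := by decide
  rw [Nat.card_congr (unanEquiv hm), Nat.card_eq_fintype_card, Fintype.card_fun, hU,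
    Fintype.card_subtype_compl, Fintype.card_fun, hU, Fintype.card_fin, Fintype.card_subtype]
  congr 2
  rw [← Finset.card_pair hne]
  congr 1
  ext v
  simp

/-- Admissible maps correspond to the families `φⱼ⁺`; the condition for `σ = -` amounts to
unanimity of `φⱼ⁺` at the all-minus vector. -/
lemma card_admissible (A : Arrangement ℓ ι) (m : ℕ) :
    Nat.card {Φ : (Fin m → A.Ch) → A.Ch // A.IsAdmissible m Φ} =
      Nat.card {f : ι → (Fin m → ℤˣ) → ℤˣ // IsFam A m f} := by
  choose ch hch using exists_chamber A
  have hadm : ∀ (f : ι → (Fin m → ℤˣ) → ℤˣ), IsFam A m f → ∀ 𝒞 : Fin m → A.Ch,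
      Realizable A (fun j => f j (fun i => A.eps j 1 (𝒞 i))) := fun f hf 𝒞 =>
    hf.2 (fun i j => A.eps j 1 (𝒞 i)) fun i => realizable_eps A (𝒞 i)
  let F : {f : ι → (Fin m → ℤˣ) → ℤˣ // IsFam A m f} →
      {Φ : (Fin m → A.Ch) → A.Ch // A.IsAdmissible m Φ} := fun f =>
    ⟨fun 𝒞 => ch _ (hadm f.1 f.2 𝒞), fun j σ w => σ * f.1 j (fun i => σ * w i), by
      refine ⟨fun j σ => ?_, fun j σ 𝒞 => ?_⟩
      · simp only [mul_one]
        rw [f.2.1, Int.units_mul_self]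
      · simp only [eps_eq_mul A j σ]
        rw [hch]
        simp only [← mul_assoc, Int.units_mul_self, one_mul]⟩
  have hF : ∀ f j 𝒞, A.eps j 1 ((F f).1 𝒞) = f.1 j (fun i => A.eps j 1 (𝒞 i)) :=
    fun f j 𝒞 => hch _ _ j
  -- every vector of signs at `j` occurs for some tuple of chambers
  have hsurj : ∀ j (w : Fin m → ℤˣ), ∃ 𝒞 : Fin m → A.Ch, (fun i => A.eps j 1 (𝒞 i)) = w := by
    intro j w
    choose s hs hsj using fun i => exists_realizable_apply_eq A j (w i)
    exact ⟨fun i => ch (s i) (hs i), funext fun i => by rw [hch, hsj]⟩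
  refine (Nat.card_congr (Equiv.ofBijective F ⟨?_, ?_⟩)).symm
  · intro f g hfg
    apply Subtype.ext
    funext j w
    obtain ⟨𝒞, rfl⟩ := hsurj j w
    rw [← hF, ← hF, hfg]
  · rintro ⟨Φ, φ, h1, h2⟩
    have hfam : IsFam A m (fun j => φ j 1) := by
      refine ⟨fun j c => ?_, fun v hv => ?_⟩
      · rcases Int.units_eq_one_or c with rfl | rfl
        · exact h1 j 1
        · obtain ⟨𝒞, h𝒞⟩ := hsurj j (fun _ => -1)
          have e1 := h2 j 1 𝒞
          have e2 := h2 j (-1) 𝒞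
          have e3 : (fun i => A.eps j (-1) (𝒞 i)) = fun _ => 1 := by
            funext i
            rw [eps_eq_mul, congrFun h𝒞 i]
            simp
          rw [e3, h1, eps_eq_mul, e1, h𝒞] at e2
          have := congrArg Neg.neg e2
          simpa using this
      · have h3 := realizable_eps A (Φ fun i => ch (v i) (hv i))
        simp only [h2, hch] at h3
        exact h3
    refine ⟨⟨_, hfam⟩, Subtype.ext (funext fun 𝒞 => chamber_ext A _ _ fun j => ?_)⟩
    rw [hF, h2]

end CardAM

/-- **Corollary (count of admissible maps).** If `𝒜 = 𝒜₁ ⊎ ⋯ ⊎ 𝒜_a ⊎ ℬ₁ ⊎ ⋯ ⊎ ℬ_b` with all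
parts nonempty indecomposable, `|𝒜_p| = 1` and `|ℬ_q| ≥ 3`, then
`|AM(𝒜, m)| = 2^{a(2^m − 2)} · m^b`. -/
theorem card_am {ℓ : ℕ} {ι : Type} [Fintype ι] [Nonempty ι] (A : Arrangement ℓ ι)
    (a b : ℕ) (P : Fin a ⊕ Fin b → Finset ι)
    (hne : ∀ i, (P i).Nonempty)
    (hdisj : Pairwise fun i k => Disjoint (P i) (P k))
    (hcover : ∀ j : ι, ∃ i, j ∈ P i)
    (hrnk : A.rnk = ∑ i, A.rnkOn (P i))
    (hind : ∀ i, A.IndecomposableOn (P i))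
    (hcard1 : ∀ p : Fin a, (P (Sum.inl p)).card = 1)
    (hcard3 : ∀ q : Fin b, 3 ≤ (P (Sum.inr q)).card)
    (m : ℕ) (hm : 0 < m) :
    Nat.card {Φ : (Fin m → A.Ch) → A.Ch // A.IsAdmissible m Φ} =
      2 ^ (a * (2 ^ m - 2)) * m ^ b := by
  rw [CardAM.card_admissible]
  choose part hpart using hcover
  have hpart_eq : ∀ i, ∀ j ∈ P i, part j = i := by
    intro i j hj
    by_contra hne'
    exact Finset.disjoint_left.mp (hdisj hne') (hpart j) hj
  let fam : (Fin a → CardAM.Unan m) × (Fin b → Fin m) → ι → (Fin m → ℤˣ) → ℤˣ := fun gd j =>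
    Sum.elim (fun p => (gd.1 p).1) (fun q w => w (gd.2 q)) (part j)
  have hfam_inl : ∀ gd p, ∀ j ∈ P (Sum.inl p), fam gd j = (gd.1 p).1 := by
    intro gd p j hj
    simp only [fam, hpart_eq _ j hj, Sum.elim_inl]
  have hfam_inr : ∀ gd q, ∀ j ∈ P (Sum.inr q), fam gd j = fun w => w (gd.2 q) := by
    intro gd q j hj
    simp only [fam, hpart_eq _ j hj, Sum.elim_inr]
  have hfam : ∀ gd, CardAM.IsFam A m (fam gd) := by
    intro gd
    refine ⟨fun j c => ?_, fun v hv => ?_⟩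
    · rcases h : part j with p | q
      · rw [hfam_inl gd p j (h ▸ hpart j), (gd.1 p).2]
      · rw [hfam_inr gd q j (h ▸ hpart j)]
    · have hy : ∀ i, ∃ y, ∀ j ∈ P i,
          0 < ((fam gd j (fun i => v i j) : ℤ) : ℝ) * A.form j y := by
        rintro (p | q)
        · obtain ⟨j, hj⟩ := Finset.card_eq_one.mp (hcard1 p)
          obtain ⟨s, ⟨y, hy⟩, hs⟩ :=
            CardAM.exists_realizable_apply_eq A j (fam gd j (fun i => v i j))
          refine ⟨y, fun k hk => ?_⟩
          rw [hj, Finset.mem_singleton] at hk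
          rw [hk, ← hs]
          exact hy j
        · obtain ⟨y, hy⟩ := hv (gd.2 q)
          refine ⟨y, fun j hj => ?_⟩
          rw [hfam_inr gd q j hj]
          exact hy j
      choose y hy using hy
      obtain ⟨x, hx⟩ := CardAM.exists_glue A P (fun j => ⟨part j, hpart j⟩) hrnk y
      refine ⟨x, fun j => ?_⟩
      rw [hx (part j) j (hpart j)]
      exact hy (part j) j (hpart j)
  have hbij : Function.Bijective (fun gd =>
      (⟨fam gd, hfam gd⟩ : {f : ι → (Fin m → ℤˣ) → ℤˣ // CardAM.IsFam A m f})) := by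
    constructor
    · intro gd gd' h
      have h' : fam gd = fam gd' := congrArg Subtype.val h
      refine Prod.ext (funext fun p => Subtype.ext ?_) (funext fun q => ?_)
      · obtain ⟨j, hj⟩ := hne (Sum.inl p)
        rw [← hfam_inl gd p j hj, ← hfam_inl gd' p j hj, h']
      · obtain ⟨j, hj⟩ := hne (Sum.inr q)
        have e := hfam_inr gd q j hj
        rw [h', hfam_inr gd' q j hj] at e
        -- distinct projections differ on the indicator of a single voter
        have e1 := congrFun e (CardAM.ind {gd.2 q})
        by_contra hcon
        simp [CardAM.ind, Ne.symm hcon] at e1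
    · rintro ⟨f, hf⟩
      have hdict : ∀ q, ∃ d, ∀ j ∈ P (Sum.inr q), ∀ w, f j w = w d := fun q =>
        CardAM.dictator_on_indecomposable A f hf _ (hind _) (le_trans (by norm_num) (hcard3 q))
      choose d hd using hdict
      choose k hk using fun p => hne (Sum.inl p)
      refine ⟨(fun p => ⟨f (k p), hf.1 (k p)⟩, d), Subtype.ext (funext fun j => ?_)⟩
      rcases h : part j with p | q
      · have hj : j ∈ P (Sum.inl p) := h ▸ hpart j
        have hjk : j = k p := Finset.card_le_one.mp (hcard1 p).le j hj (k p) (hk p)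
        exact (hfam_inl _ p j hj).trans (by rw [hjk])
      · have hj : j ∈ P (Sum.inr q) := h ▸ hpart j
        exact (hfam_inr _ q j hj).trans (funext fun w => (hd q j hj w).symm)
  rw [← Nat.card_congr (Equiv.ofBijective _ hbij), Nat.card_prod, Nat.card_fun, Nat.card_fun,
    CardAM.card_unan hm]
  simp only [Nat.card_eq_fintype_card, Fintype.card_fin]
  rw [← pow_mul, mul_comm a]
end
end

section
/- Let ℓ ≥ 2 and let 𝒜 be the braid arrangement in ℝ^ℓ, i.e., 𝒜 = {H_{ij} : 1 ≤ i < j ≤ ℓ} where H_{ij} = ker(x_i − x_j). Then 𝒜 is indecomposable. -/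
/-!
Let `V₁`, `V₂` be the intersections of the hyperplanes of the two parts of a decomposition.
Additivity of the rank means, by the dimension formula, that `V₁ + V₂` is the whole space
(`sup_eq_top_of_rnkOn_add`). Say that `i` and `j` are `k`-related if `x i = x j` for every
`x ∈ Vₖ`. These are two equivalence relations on the coordinates. Every pair of coordinates is
related by at least one of them, since the hyperplane `x i = x j` belongs to one of the parts;
a pair of distinct coordinates cannot be related by both, since then `x i = x j` would hold on
`V₁ + V₂`. But a union of two equivalence relations is everything only if one of them is
(`rel_total_of_union`), whereas each part contains a hyperplane.
-/

noncomputable section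
attribute [local instance] Classical.propDecidable

/-- If the ranks of two subarrangements add up to the rank of their union, then the
intersections of their hyperplanes together span the ambient space. -/
theorem sup_eq_top_of_rnkOn_add {ℓ : ℕ} {ι : Type} [Fintype ι] (A : Arrangement ℓ ι)
    (S₁ S₂ : Finset ι) (h : A.rnkOn (S₁ ∪ S₂) = A.rnkOn S₁ + A.rnkOn S₂) :
    (⨅ j ∈ S₁, LinearMap.ker (A.form j)) ⊔ (⨅ j ∈ S₂, LinearMap.ker (A.form j)) = ⊤ := by
  unfold Arrangement.rnkOn at h
  rw [Finset.iInf_union] at h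
  set V₁ := ⨅ j ∈ S₁, LinearMap.ker (A.form j)
  set V₂ := ⨅ j ∈ S₂, LinearMap.ker (A.form j)
  have hdim := Submodule.finrank_sup_add_finrank_inf_eq V₁ V₂
  have h₁ := Submodule.finrank_le V₁
  have h₂ := Submodule.finrank_le V₂
  have h₃ := Submodule.finrank_le (V₁ ⊓ V₂)
  apply Submodule.eq_top_of_finrank_eq
  rw [Module.finrank_fin_fun] at *
  omega

theorem rel_total_of_union {α : Type*} {P Q : α → α → Prop} (hP : Equivalence P)
    (hQ : Equivalence Q) (h : ∀ a b, P a b ∨ Q a b) : (∀ a b, P a b) ∨ ∀ a b, Q a b := by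
  by_contra! hcon
  obtain ⟨⟨a, b, hab⟩, c, d, hcd⟩ := hcon
  have hQab := (h a b).resolve_left hab
  -- An element not `Q`-related to `a` is `P`-related to both `a` and `b`, which is impossible;
  -- `c` and `d` are not `Q`-related, so one of them is such an element.
  have key : ∀ e, ¬ Q a e → P a e ∧ P b e := fun e he =>
    ⟨(h a e).resolve_right he,
      (h b e).resolve_right fun hbe => he (hQ.trans hQab hbe)⟩
  by_cases hac : Q a c
  · obtain ⟨h₁, h₂⟩ := key d fun had => hcd (hQ.trans (hQ.symm hac) had)
    exact hab (hP.trans h₁ (hP.symm h₂))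
  · obtain ⟨h₁, h₂⟩ := key c hac
    exact hab (hP.trans h₁ (hP.symm h₂))

/-- **Example.** The braid arrangement `𝒜 = {ker (x_i − x_j) : 1 ≤ i < j ≤ ℓ}` in `ℝ^ℓ`,
`ℓ ≥ 2`, is indecomposable. -/
theorem braid_indecomposable (ℓ : ℕ) (hℓ : 2 ≤ ℓ)
    (A : Arrangement ℓ {p : Fin ℓ × Fin ℓ // p.1 < p.2})
    (hA : ∀ p, A.form p =
      (LinearMap.proj (R := ℝ) (φ := fun _ : Fin ℓ => ℝ) p.1.1) -
      (LinearMap.proj (R := ℝ) (φ := fun _ : Fin ℓ => ℝ) p.1.2)) :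
    A.Indecomposable := by
  rintro ⟨S₁, S₂, ⟨p, hp⟩, ⟨q, hq⟩, -, hU, hr⟩
  rw [← hU] at hr
  have htop := sup_eq_top_of_rnkOn_add A S₁ S₂ hr
  have hmem : ∀ (S : Finset {p : Fin ℓ × Fin ℓ // p.1 < p.2}), ∀ p ∈ S,
      ∀ x ∈ (⨅ j ∈ S, LinearMap.ker (A.form j)), x p.1.1 = x p.1.2 := by
    intro S p hp x hx
    simp only [Submodule.mem_iInf, LinearMap.mem_ker] at hx
    simpa [hA, sub_eq_zero] using hx p hp
  have hP := hmem S₁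
  have hQ := hmem S₂
  set V₁ := ⨅ j ∈ S₁, LinearMap.ker (A.form j)
  set V₂ := ⨅ j ∈ S₂, LinearMap.ker (A.form j)
  have hequiv : ∀ V : Submodule ℝ (Fin ℓ → ℝ), Equivalence fun i j => ∀ x ∈ V, x i = x j :=
    fun V => ⟨fun _ _ _ => rfl, fun h x hx => (h x hx).symm,
      fun h h' x hx => (h x hx).trans (h' x hx)⟩
  have hlt : ∀ i j, i < j → (∀ x ∈ V₁, x i = x j) ∨ ∀ x ∈ V₂, x i = x j := by
    intro i j hij
    have hm := Finset.mem_univ (⟨(i, j), hij⟩ : {p : Fin ℓ × Fin ℓ // p.1 < p.2})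
    rw [← hU] at hm
    simp only [Finset.mem_union] at hm
    exact hm.imp (hP _) (hQ _)
  have hall : ∀ i j, (∀ x ∈ V₁, x i = x j) ∨ ∀ x ∈ V₂, x i = x j := by
    intro i j
    rcases lt_trichotomy i j with hij | rfl | hij
    · exact hlt i j hij
    · exact Or.inl fun _ _ => rfl
    · exact (hlt j i hij).imp (hequiv V₁).symm (hequiv V₂).symm
  have hnot : ∀ i j, i < j → (∀ x ∈ V₁, x i = x j) → (∀ x ∈ V₂, x i = x j) → False := by
    intro i j hij h₁ h₂
    have hx : (Pi.single i 1 : Fin ℓ → ℝ) ∈ V₁ ⊔ V₂ := htop ▸ Submodule.mem_top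
    obtain ⟨y, hy, z, hz, hyz⟩ := Submodule.mem_sup.1 hx
    have hi := congrFun hyz i
    have hj := congrFun hyz j
    simp only [Pi.add_apply, Pi.single_eq_same, Pi.single_eq_of_ne hij.ne'] at hi hj
    linarith [h₁ y hy, h₂ z hz]
  rcases rel_total_of_union (hequiv V₁) (hequiv V₂) hall with h | h
  · exact hnot _ _ q.2 (h _ _) (hQ q hq)
  · exact hnot _ _ p.2 (hP p hp) (h _ _)
end
end

section
/- Any nonempty real central arrangement 𝒜 can be decomposed into nonempty indecomposable arrangements, 𝒜 = 𝒜₁ ⊎ 𝒜₂ ⊎ ⋯ ⊎ 𝒜_r, and this decomposition is unique up to the order of the factors. -/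
/-!
The rank function `r = rnkOn` of an arrangement vanishes on `∅` and is submodular, because
`dim (U ⊔ V) + dim (U ⊓ V) = dim U + dim V` for subspaces; it is in particular subadditive.

Existence: split decomposable sets repeatedly until every part is indecomposable
(`exists_decomposition`).

Uniqueness: if `r(𝒜) = r(T) + r(Tᶜ)`, submodularity forces
`r(S) = r(S ∩ T) + r(S ∩ Tᶜ)` for every `S` (`rnkOn_inter_add_le`). Each part `q` of a
decomposition splits the whole arrangement additively into `q` and its complement
(`rnkOn_add_compl_le`), so an indecomposable set that meets `q` lies inside `q`
(`subset_of_indecomposableOn`). Intersecting parts of two indecomposable decompositions therefore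
contain each other, and the two decompositions coincide.
-/

noncomputable section
attribute [local instance] Classical.propDecidable

namespace Arrangement

variable {ℓ : ℕ} {ι : Type} [Fintype ι] (A : Arrangement ℓ ι)

lemma rnkOn_empty : A.rnkOn ∅ = 0 := by
  have h : (⨅ j ∈ (∅ : Finset ι), LinearMap.ker (A.form j)) = ⊤ := by simp
  rw [rnkOn, h, finrank_top]
  simp

lemma rnkOn_submodular (S T : Finset ι) :
    A.rnkOn (S ∪ T) + A.rnkOn (S ∩ T) ≤ A.rnkOn S + A.rnkOn T := by
  unfold rnkOn
  set K : Finset ι → Submodule ℝ (Fin ℓ → ℝ) := fun S => ⨅ j ∈ S, LinearMap.ker (A.form j) with hK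
  have hle : ∀ S, Module.finrank ℝ (K S) ≤ ℓ := fun S => by
    simpa using Submodule.finrank_le (K S)
  have hanti : ∀ {S T : Finset ι}, S ⊆ T → K T ≤ K S := fun h => biInf_mono h
  have hunion : K (S ∪ T) = K S ⊓ K T := Finset.iInf_union
  have hinter : K S ⊔ K T ≤ K (S ∩ T) :=
    sup_le (hanti Finset.inter_subset_left) (hanti Finset.inter_subset_right)
  have h1 := Submodule.finrank_mono hinter
  have h2 := Submodule.finrank_sup_add_finrank_inf_eq (K S) (K T)
  rw [← hunion] at h2
  have := hle S
  have := hle T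
  have := hle (S ∪ T)
  have := hle (S ∩ T)
  change (ℓ - Module.finrank ℝ (K (S ∪ T))) + (ℓ - Module.finrank ℝ (K (S ∩ T))) ≤
    (ℓ - Module.finrank ℝ (K S)) + (ℓ - Module.finrank ℝ (K T))
  omega

lemma rnkOn_union_le (S T : Finset ι) : A.rnkOn (S ∪ T) ≤ A.rnkOn S + A.rnkOn T :=
  (Nat.le_add_right _ _).trans (A.rnkOn_submodular S T)

lemma rnkOn_biUnion_le (P : Finset (Finset ι)) :
    A.rnkOn (P.biUnion id) ≤ ∑ p ∈ P, A.rnkOn p := by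
  induction P using Finset.induction_on with
  | empty => simp [rnkOn_empty]
  | insert a P ha ih =>
    rw [Finset.biUnion_insert, Finset.sum_insert ha]
    exact (A.rnkOn_union_le _ _).trans (Nat.add_le_add_left ih _)

/-- An additive splitting of the whole arrangement into `T` and its complement induces an additive
splitting of every subarrangement; the reverse inequality is subadditivity. -/
lemma rnkOn_inter_add_le {T : Finset ι} (hT : A.rnkOn T + A.rnkOn Tᶜ ≤ A.rnk) (S : Finset ι) :
    A.rnkOn (S ∩ T) + A.rnkOn (S ∩ Tᶜ) ≤ A.rnkOn S := by
  have h1 := A.rnkOn_submodular S T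
  have h2 := A.rnkOn_submodular (S ∪ T) Tᶜ
  have e1 : (S ∪ T) ∪ Tᶜ = Finset.univ := by
    rw [Finset.union_assoc, Finset.union_compl]
    simp
  have e2 : (S ∪ T) ∩ Tᶜ = S ∩ Tᶜ := by
    ext j; by_cases hj : j ∈ T <;> simp [hj]
  rw [e1, e2] at h2
  unfold rnk at hT
  omega

lemma rnkOn_add_compl_le {Q : Finset (Finset ι)}
    (hdisj : (Q : Set (Finset ι)).PairwiseDisjoint id) (hcov : ∀ j : ι, ∃ q ∈ Q, j ∈ q)
    (hr : A.rnk = ∑ q ∈ Q, A.rnkOn q) {q : Finset ι} (hq : q ∈ Q) :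
    A.rnkOn q + A.rnkOn qᶜ ≤ A.rnk := by
  have e : qᶜ = (Q.erase q).biUnion id := by
    ext j
    simp only [Finset.mem_compl, Finset.mem_biUnion, Finset.mem_erase, id]
    constructor
    · intro hj
      obtain ⟨p, hp, hjp⟩ := hcov j
      exact ⟨p, ⟨fun h => hj (h ▸ hjp), hp⟩, hjp⟩
    · rintro ⟨p, ⟨hne, hp⟩, hjp⟩ hjq
      exact Finset.disjoint_left.mp (hdisj hp hq hne) hjp hjq
  rw [hr, ← Finset.add_sum_erase Q _ hq, e]
  exact Nat.add_le_add_left (A.rnkOn_biUnion_le _) _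

lemma subset_of_indecomposableOn {p T : Finset ι} (hp : A.IndecomposableOn p)
    (hT : A.rnkOn T + A.rnkOn Tᶜ ≤ A.rnk) {j : ι} (hjp : j ∈ p) (hjT : j ∈ T) : p ⊆ T := by
  intro k hk
  by_contra hkT
  have e : (p ∩ T) ∪ (p ∩ Tᶜ) = p := by
    rw [← Finset.inter_union_distrib_left, Finset.union_compl, Finset.inter_univ]
  refine hp ⟨p ∩ T, p ∩ Tᶜ, ⟨j, by simp [hjp, hjT]⟩, ⟨k, by simp [hk, hkT]⟩, ?_, e, ?_⟩
  · rw [Finset.disjoint_left]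
    intro x hx hx'
    simp_all
  · refine le_antisymm ?_ (A.rnkOn_inter_add_le hT p)
    conv_lhs => rw [← e]
    exact A.rnkOn_union_le _ _

/-- One half of uniqueness: a part of one indecomposable decomposition and a part of another
that share a hyperplane contain each other, hence are equal. -/
lemma decomposition_subset {P Q : Finset (Finset ι)}
    (hne : ∀ p ∈ P, p.Nonempty)
    (hPdisj : (P : Set (Finset ι)).PairwiseDisjoint id) (hPcov : ∀ j : ι, ∃ p ∈ P, j ∈ p)
    (hPr : A.rnk = ∑ p ∈ P, A.rnkOn p) (hP : ∀ p ∈ P, A.IndecomposableOn p)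
    (hQdisj : (Q : Set (Finset ι)).PairwiseDisjoint id) (hQcov : ∀ j : ι, ∃ q ∈ Q, j ∈ q)
    (hQr : A.rnk = ∑ q ∈ Q, A.rnkOn q) (hQ : ∀ q ∈ Q, A.IndecomposableOn q) : P ⊆ Q := by
  intro p hp
  obtain ⟨j, hj⟩ := hne p hp
  obtain ⟨q, hq, hjq⟩ := hQcov j
  have h1 := A.subset_of_indecomposableOn (hP p hp) (A.rnkOn_add_compl_le hQdisj hQcov hQr hq) hj hjq
  have h2 := A.subset_of_indecomposableOn (hQ q hq) (A.rnkOn_add_compl_le hPdisj hPcov hPr hp) hjq hj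
  rwa [h1.antisymm h2]

lemma exists_decomposition (S : Finset ι) :
    ∃ P : Finset (Finset ι),
      (∀ p ∈ P, p.Nonempty) ∧
      (P : Set (Finset ι)).PairwiseDisjoint id ∧
      P.biUnion id = S ∧
      A.rnkOn S = ∑ p ∈ P, A.rnkOn p ∧
      ∀ p ∈ P, A.IndecomposableOn p := by
  induction S using Finset.strongInduction with
  | H S ih =>
  rcases S.eq_empty_or_nonempty with rfl | hS
  · exact ⟨∅, by simp [rnkOn_empty]⟩
  by_cases hdec : A.DecomposableOn S
  · obtain ⟨S₁, S₂, hS₁, hS₂, hd, rfl, hr⟩ := hdec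
    have hlt₁ : S₁ ⊂ S₁ ∪ S₂ := by
      refine Finset.ssubset_iff_subset_ne.mpr ⟨Finset.subset_union_left, fun h => ?_⟩
      obtain ⟨x, hx⟩ := hS₂
      exact Finset.disjoint_right.mp hd hx (h ▸ Finset.mem_union_right _ hx)
    have hlt₂ : S₂ ⊂ S₁ ∪ S₂ := by
      refine Finset.ssubset_iff_subset_ne.mpr ⟨Finset.subset_union_right, fun h => ?_⟩
      obtain ⟨x, hx⟩ := hS₁
      exact Finset.disjoint_left.mp hd hx (h ▸ Finset.mem_union_left _ hx)
    obtain ⟨P₁, hne₁, hd₁, hu₁, hr₁, hi₁⟩ := ih S₁ hlt₁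
    obtain ⟨P₂, hne₂, hd₂, hu₂, hr₂, hi₂⟩ := ih S₂ hlt₂
    have hcross : ∀ p ∈ P₁, ∀ q ∈ P₂, Disjoint p q := fun p hp q hq =>
      hd.mono (hu₁ ▸ Finset.subset_biUnion_of_mem id hp)
        (hu₂ ▸ Finset.subset_biUnion_of_mem id hq)
    have hP : Disjoint P₁ P₂ := by
      rw [Finset.disjoint_left]
      intro p hp hp'
      exact (hne₁ p hp).ne_empty (disjoint_self.mp (hcross p hp p hp'))
    refine ⟨P₁ ∪ P₂, ?_, ?_, ?_, ?_, ?_⟩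
    · intro p hp
      exact (Finset.mem_union.mp hp).elim (hne₁ p) (hne₂ p)
    · rw [Finset.coe_union, Set.pairwiseDisjoint_union]
      exact ⟨hd₁, hd₂, fun p hp q hq _ => hcross p hp q hq⟩
    · rw [Finset.union_biUnion, hu₁, hu₂]
    · rw [Finset.sum_union hP, hr, hr₁, hr₂]
    · intro p hp
      exact (Finset.mem_union.mp hp).elim (hi₁ p) (hi₂ p)
  · exact ⟨{S}, by simpa using hS, by simp, by simp, by simp, by simpa [IndecomposableOn] using hdec⟩

end Arrangement

/-- **Proposition.** Any nonempty real central arrangement decomposes, uniquely up to the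
order of the factors, into nonempty indecomposable arrangements
`𝒜 = 𝒜₁ ⊎ 𝒜₂ ⊎ ⋯ ⊎ 𝒜_r` (the decomposition is recorded as the unordered set of parts). -/
theorem unique_indecomposable_decomposition {ℓ : ℕ} {ι : Type} [Fintype ι] [Nonempty ι]
    (A : Arrangement ℓ ι) :
    ∃! P : Finset (Finset ι),
      (∀ p ∈ P, p.Nonempty) ∧
      (P : Set (Finset ι)).PairwiseDisjoint id ∧
      (∀ j : ι, ∃ p ∈ P, j ∈ p) ∧
      A.rnk = ∑ p ∈ P, A.rnkOn p ∧
      ∀ p ∈ P, A.IndecomposableOn p := by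
  obtain ⟨P, hne, hd, hu, hr, hi⟩ := A.exists_decomposition Finset.univ
  have hcov : ∀ j : ι, ∃ p ∈ P, j ∈ p := fun j => by
    have hj : j ∈ P.biUnion id := hu ▸ Finset.mem_univ j
    simpa using hj
  refine ⟨P, ⟨hne, hd, hcov, hr, hi⟩, ?_⟩
  rintro Q ⟨hne', hd', hcov', hr', hi'⟩
  exact (A.decomposition_subset hne' hd' hcov' hr' hi' hd hcov hr hi).antisymm
    (A.decomposition_subset hne hd hcov hr hi hd' hcov' hr' hi')
end
end
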